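/- Let M ≥ 0, ρ ∈ (0,1) and c ∈ L^∞(B_ρ⁺). Suppose u ∈ C^{2s+α}(B_ρ) ∩ 𝒜_s(ℝⁿ) for some α > 0 with 2s+α not an integer and (−Δ)^s u(x) + c(x)·u(x) ≤ M·x₁ for all x ∈ B_ρ⁺ (no sign assumption on u is made). Then there exists C_ρ > 0, depending only on n, s, ‖c‖_{L^∞(B_ρ⁺)} and ρ, such that sup_{x∈B_{ρ/2}⁺} u(x)/x₁ ≤ C_ρ·( ‖u‖_{𝒜_s(ℝⁿ)} + M ). -/

import Mathlib

open MeasureTheory Metric Filter Topology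

noncomputable section

/-- Euclidean space `ℝⁿ`. -/
abbrev Euc (n : ℕ) := EuclideanSpace ℝ (Fin n)

/-- Reflection `x ↦ x_* = (-x₁, x')` across the hyperplane `{x₁ = 0}`. -/
def reflFirst (n : ℕ) [NeZero n] (x : Euc n) : Euc n :=
  x - (2 * x 0) • EuclideanSpace.single 0 1

/-- The open half space `ℝⁿ₊ = {x : x₁ > 0}`. -/
def halfSpace (n : ℕ) [NeZero n] : Set (Euc n) := {x | 0 < x 0}

/-- `u` is antisymmetric: `u(x_*) = -u(x)`. -/
def AntiSymmFn (n : ℕ) [NeZero n] (u : Euc n → ℝ) : Prop :=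
  ∀ x, u (reflFirst n x) = - u x

/-- The normalising constant `c_{n,s}` of the fractional Laplacian. -/
def cns (n : ℕ) (s : ℝ) : ℝ :=
  s * (4 : ℝ) ^ s * Real.Gamma (((n : ℝ) + 2 * s) / 2) /
    (Real.pi ^ ((n : ℝ) / 2) * Real.Gamma (1 - s))

/-- The constant `γ_{n,s}` of the mean value formula. -/
def gammans (n : ℕ) (s : ℝ) : ℝ :=
  Real.sin (Real.pi * s) * Real.Gamma ((n : ℝ) / 2) / Real.pi ^ ((n : ℝ) / 2 + 1)

/-- The first standard basis vector `e₁`. -/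
def e1 (n : ℕ) [NeZero n] : Euc n := EuclideanSpace.single 0 1

/-- `‖u‖_{𝒜ₛ(ℝⁿ)} = ∫_{ℝⁿ₊} x₁|u(x)|/(1+|x|^{n+2s+2}) dx`. -/
def ANorm (n : ℕ) [NeZero n] (s : ℝ) (u : Euc n → ℝ) : ℝ :=
  ∫ x in halfSpace n, x 0 * |u x| / (1 + ‖x‖ ^ ((n : ℝ) + 2 * s + 2))

/-- `u ∈ 𝒜ₛ(ℝⁿ)`. -/
def MemA (n : ℕ) [NeZero n] (s : ℝ) (u : Euc n → ℝ) : Prop :=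
  AntiSymmFn n u ∧ LocallyIntegrable u volume ∧
    IntegrableOn (fun x => x 0 * |u x| / (1 + ‖x‖ ^ ((n : ℝ) + 2 * s + 2))) (halfSpace n) volume

/-- `u ∈ ℒₛ(ℝⁿ)`. -/
def MemL (n : ℕ) (s : ℝ) (u : Euc n → ℝ) : Prop :=
  LocallyIntegrable u volume ∧
    Integrable (fun x => |u x| / (1 + ‖x‖ ^ ((n : ℝ) + 2 * s))) volume

/-- Membership in the Hölder space `C^β = C^{⌊β⌋, β-⌊β⌋}` on `Ω`. -/
def MemHolderOn {X : Type*} [NormedAddCommGroup X] [NormedSpace ℝ X]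
    (β : ℝ) (Ω : Set X) (u : X → ℝ) : Prop :=
  ContDiffOn ℝ (⌊β⌋₊ : ℕ) u Ω ∧
    ∃ C : NNReal, HolderOnWith C (β - ⌊β⌋₊).toNNReal (iteratedFDerivWithin ℝ ⌊β⌋₊ u Ω) Ω

/-- `K` bounds the `C^β = C^{⌊β⌋, β-⌊β⌋}` norm of `u` on `Ω`. -/
def HolderBoundBy {X : Type*} [NormedAddCommGroup X] [NormedSpace ℝ X]
    (β : ℝ) (Ω : Set X) (u : X → ℝ) (K : ℝ) : Prop :=
  (∀ i ≤ ⌊β⌋₊, ∀ x ∈ Ω, ‖iteratedFDerivWithin ℝ i u Ω x‖ ≤ K) ∧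
    HolderOnWith K.toNNReal (β - ⌊β⌋₊).toNNReal (iteratedFDerivWithin ℝ ⌊β⌋₊ u Ω) Ω

/-- `β` is not an integer. -/
def NotInteger (β : ℝ) : Prop := ∀ k : ℤ, β ≠ k

/-- The antisymmetric kernel `|x-y|^{-n-2s} - |x_*-y|^{-n-2s}`. -/
def aKernel (n : ℕ) [NeZero n] (s : ℝ) (x y : Euc n) : ℝ :=
  ‖x - y‖ ^ (-((n : ℝ) + 2 * s)) - ‖reflFirst n x - y‖ ^ (-((n : ℝ) + 2 * s))

/-- `(-Δ)ˢ u (x) = L` in the antisymmetric sense of Definition 1.4: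
the truncated integrals over `ℝⁿ₊ ∖ B_ε(x)` (plus the constant zero-th order term)
converge to `L` as `ε → 0⁺`. -/
def HasAntiFracLap (n : ℕ) [NeZero n] (s : ℝ) (u : Euc n → ℝ) (x : Euc n) (L : ℝ) : Prop :=
  Filter.Tendsto
    (fun ε : ℝ =>
      cns n s * (∫ y in halfSpace n \ Metric.ball x ε, aKernel n s x y * (u x - u y)) +
        (cns 1 s / s) * u x * (x 0) ^ (-(2 * s)))
    (𝓝[>] (0 : ℝ)) (𝓝 L)

/-- `(-Δ)ˢ u (x) = L` in the principal value sense. -/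
def HasPVFracLap (n : ℕ) (s : ℝ) (u : Euc n → ℝ) (x : Euc n) (L : ℝ) : Prop :=
  Filter.Tendsto
    (fun ε : ℝ =>
      cns n s * ∫ y in (Metric.ball x ε)ᶜ, (u x - u y) / ‖x - y‖ ^ ((n : ℝ) + 2 * s))
    (𝓝[>] (0 : ℝ)) (𝓝 L)

/-!
The proof compares `u` with multiples of the barrier `bar = x₁ (m - |x|²)^{-(n+2)}`, which blows up
on the sphere of radius `√m = 3ρ/4` and is comparable to `x₁` on `B_{ρ/2}⁺`.

If `u > ε` somewhere in the half ball of radius `3ρ/4`, there is a smallest `τ > 0` with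
`u ≤ τ bar + ε` there, and equality holds at some point `a` with `a₁ > 0` and
`D := m - |a|² > 0` (`exists_touching`); near `{x₁ = 0}` nothing can happen, as antisymmetry
makes `u` vanish on that hyperplane. The equation at `a` then bounds `τ` by a multiple of
`‖u‖_{𝒜ₛ} + M` (`touching_bound`), and `ε → 0` gives the claim.

For `touching_bound`, let `R = θ D` with `θ` small. The zero-order term of the operator equals
`2 u(a)` times the mass of the reflected kernel over the half space (`reflected_kernel_mass`), so
the operator can be estimated through a single integral over `ℝⁿ₊`, whose integrand is compared
pointwise with that of the barrier (`truncated_pointwise`, integrated in `truncated_lower`).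
* Inside `B_R(a)`, `u` is replaced by the barrier. Reflecting the lower part of the ball turns this
  into a principal value integral of the odd function `bar`; averaging it over the four maps
  `z ↦ ± z, ± z_*` bounds it below by `- C a₁ D^{-(n+4)} R^{2-2s}`, with the decisive factor `a₁`
  (`exists_bar_symm`, `exists_annulus_bound`, `half_integral_ge`).
* On the ball `B_{R/4}(a + (R/2) e₁)` the barrier is not subtracted. This gains `c R^{-2s} u(a)`
  (`gain_pointwise`) at the price of `∫ K |u|` over this ball, `K` being the antisymmetric kernel.
* Outside `B_R(a)` and on the gain ball, `K(a, y) |u(y)|` is at most a multiple of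
  `R^{-(n+2s+2)} a₁ y₁ |u(y)| / (1 + |y|^{n+2s+2})`, whose integral is controlled by `‖u‖_{𝒜ₛ}`
  (`aKernel_mul_abs_le`).

For `θ` small the gain absorbs the barrier error, which is smaller by a factor `θ²`, and the term
`c u`, which is smaller by a factor `θ^{2s}`. The far-field error relative to `R^{-2s} bar(a)` is a
constant multiple of `θ^{-(n+2)} ‖u‖_{𝒜ₛ}`, independently of `a`: this fixes the exponent `n + 2`.
-/

/-! ### Reflection and pointwise bounds for the antisymmetric kernel -/

lemma reflFirst_zero (n : ℕ) [NeZero n] (x : Euc n) : reflFirst n x 0 = - x 0 := by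
  simp [reflFirst]; ring

lemma reflFirst_ne (n : ℕ) [NeZero n] (x : Euc n) {i : Fin n} (hi : i ≠ 0) :
    reflFirst n x i = x i := by
  simp [reflFirst, hi]

lemma reflFirst_reflFirst (n : ℕ) [NeZero n] (x : Euc n) : reflFirst n (reflFirst n x) = x := by
  ext i
  by_cases hi : i = 0
  · subst hi; simp [reflFirst_zero]
  · simp [reflFirst_ne, hi]

/-- The reflection across `{x₁ = 0}` as a linear isometry. -/
def reflIso (n : ℕ) [NeZero n] : Euc n ≃ₗᵢ[ℝ] Euc n where
  toFun := reflFirst n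
  invFun := reflFirst n
  left_inv := reflFirst_reflFirst n
  right_inv := reflFirst_reflFirst n
  map_add' x y := by
    ext i
    by_cases hi : i = 0
    · subst hi; simp [reflFirst_zero]; ring
    · simp [reflFirst_ne, hi]
  map_smul' c x := by
    ext i
    by_cases hi : i = 0
    · subst hi; simp [reflFirst_zero]
    · simp [reflFirst_ne, hi]
  norm_map' x := by
    simp only [EuclideanSpace.norm_eq]
    congr 1
    refine Finset.sum_congr rfl fun i _ => ?_
    change ‖reflFirst n x i‖ ^ 2 = _
    by_cases hi : i = 0
    · subst hi; simp [reflFirst_zero]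
    · simp [reflFirst_ne, hi]

lemma reflIso_apply (n : ℕ) [NeZero n] (x : Euc n) : reflIso n x = reflFirst n x := rfl

lemma reflFirst_norm (n : ℕ) [NeZero n] (x : Euc n) : ‖reflFirst n x‖ = ‖x‖ :=
  (reflIso n).norm_map x

lemma reflFirst_add (n : ℕ) [NeZero n] (x y : Euc n) :
    reflFirst n (x + y) = reflFirst n x + reflFirst n y := (reflIso n).map_add x y

lemma reflFirst_sub (n : ℕ) [NeZero n] (x y : Euc n) :
    reflFirst n (x - y) = reflFirst n x - reflFirst n y := (reflIso n).map_sub x y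

lemma reflFirst_neg (n : ℕ) [NeZero n] (x : Euc n) :
    reflFirst n (-x) = - reflFirst n x := (reflIso n).map_neg x

lemma norm_reflFirst_sub (n : ℕ) [NeZero n] (a y : Euc n) :
    ‖reflFirst n a - y‖ = ‖a - reflFirst n y‖ := by
  rw [← reflFirst_norm n (a - reflFirst n y), reflFirst_sub, reflFirst_reflFirst]

lemma norm_sq_reflFirst_sub (n : ℕ) [NeZero n] (a y : Euc n) :
    ‖reflFirst n a - y‖ ^ 2 = ‖a - y‖ ^ 2 + 4 * a 0 * y 0 := by
  have h : reflFirst n a - y = (a - y) - (2 * a 0) • EuclideanSpace.single 0 1 := by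
    simp only [reflFirst]; abel
  rw [h, norm_sub_sq_real, inner_smul_right, norm_smul, EuclideanSpace.inner_single_right]
  simp [mul_pow]
  ring

lemma measurePreserving_reflFirst (n : ℕ) [NeZero n] :
    MeasurePreserving (reflFirst n) (volume : Measure (Euc n)) volume :=
  (reflIso n).measurePreserving

lemma measurableEmbedding_reflFirst (n : ℕ) [NeZero n] :
    MeasurableEmbedding (reflFirst n : Euc n → Euc n) :=
  (reflIso n).toHomeomorph.measurableEmbedding

lemma abs_coord_le_norm {n : ℕ} (x : Euc n) (i : Fin n) : |x i| ≤ ‖x‖ := by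
  simpa using PiLp.norm_apply_le x i

lemma measurableSet_halfSpace (n : ℕ) [NeZero n] : MeasurableSet (halfSpace n) := by
  apply IsOpen.measurableSet
  apply isOpen_lt continuous_const
  fun_prop

lemma norm_sub_le_reflFirst (n : ℕ) [NeZero n] {a y : Euc n} (ha : 0 ≤ a 0) (hy : 0 ≤ y 0) :
    ‖a - y‖ ≤ ‖reflFirst n a - y‖ := by
  have h := norm_sq_reflFirst_sub n a y
  have : 0 ≤ a 0 * y 0 := mul_nonneg ha hy
  exact le_of_sq_le_sq (by nlinarith) (norm_nonneg _)

/-- Scalar core of the upper bound for the antisymmetric kernel. -/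
lemma rpow_neg_sub_le {p r q : ℝ} (hp : 0 ≤ p) (hr : 0 < r) (hq : r ≤ q) :
    r ^ (-p) - q ^ (-p) ≤ p / 2 * (q ^ 2 - r ^ 2) * r ^ (-(p + 2)) := by
  have hq0 : 0 < q := hr.trans_le hq
  have e1 : q ^ (-p) = r ^ (-p) * Real.exp (-p * Real.log (q / r)) := by
    rw [Real.rpow_def_of_pos hq0, Real.rpow_def_of_pos hr, ← Real.exp_add,
      Real.log_div hq0.ne' hr.ne']
    ring_nf
  have e2 : r ^ (-(p + 2)) = r ^ (-p) * (r ^ 2)⁻¹ := by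
    rw [neg_add, Real.rpow_add hr, Real.rpow_neg hr.le 2]; norm_num
  have h3 : Real.log (q / r) ≤ (q ^ 2 / r ^ 2 - 1) / 2 := by
    have := Real.log_le_sub_one_of_pos (x := (q / r) ^ 2) (by positivity)
    rw [Real.log_pow, div_pow] at this
    push_cast at this
    linarith
  have h4 := Real.add_one_le_exp (-p * Real.log (q / r))
  have h5 : p * Real.log (q / r) ≤ p * ((q ^ 2 / r ^ 2 - 1) / 2) :=
    mul_le_mul_of_nonneg_left h3 hp
  have h6 : 0 < r ^ (-p) := Real.rpow_pos_of_pos hr _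
  rw [e1, e2]
  have : r ^ (-p) * (1 - Real.exp (-p * Real.log (q / r))) ≤
      r ^ (-p) * (p * ((q ^ 2 / r ^ 2 - 1) / 2)) :=
    mul_le_mul_of_nonneg_left (by linarith) h6.le
  calc _ = r ^ (-p) * (1 - Real.exp (-p * Real.log (q / r))) := by ring
    _ ≤ _ := this
    _ = _ := by field_simp

/-- Scalar core of the lower bound for the antisymmetric kernel; uses `x ^ p ≤ x ≤ (1 + x²) / 2`
for `x = r / q ∈ (0, 1]`. -/
lemma le_rpow_neg_sub {p r q : ℝ} (hp : 1 ≤ p) (hr : 0 < r) (hq : r ≤ q) :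
    r ^ (-p) * ((q ^ 2 - r ^ 2) / (2 * q ^ 2)) ≤ r ^ (-p) - q ^ (-p) := by
  have hq0 : 0 < q := hr.trans_le hq
  have e1 : q ^ (-p) = r ^ (-p) * (r / q) ^ p := by
    rw [Real.div_rpow hr.le hq0.le, Real.rpow_neg hr.le, Real.rpow_neg hq0.le]
    have : 0 < r ^ p := Real.rpow_pos_of_pos hr _
    field_simp
  have h1 : (r / q) ^ p ≤ r / q := by
    have := Real.rpow_le_rpow_of_exponent_ge (x := r / q) (by positivity)
      ((div_le_one hq0).2 hq) hp
    simpa using this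
  have h6 : 0 < r ^ (-p) := Real.rpow_pos_of_pos hr _
  have h2 : (q ^ 2 - r ^ 2) / (2 * q ^ 2) ≤ 1 - (r / q) ^ p := by
    have : (q ^ 2 - r ^ 2) / (2 * q ^ 2) = (1 - (r / q) ^ 2) / 2 := by field_simp
    rw [this]
    nlinarith [sq_nonneg (1 - r / q)]
  calc _ ≤ r ^ (-p) * (1 - (r / q) ^ p) := mul_le_mul_of_nonneg_left h2 h6.le
    _ = _ := by rw [e1]; ring

lemma aKernel_le (n : ℕ) [NeZero n] {s : ℝ} (hs : 0 < s) {a y : Euc n} (ha : 0 ≤ a 0)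
    (hy : 0 ≤ y 0) (hay : y ≠ a) :
    aKernel n s a y ≤ 2 * (n + 2 * s) * a 0 * y 0 * ‖a - y‖ ^ (-((n : ℝ) + 2 * s + 2)) := by
  have h := rpow_neg_sub_le (p := (n : ℝ) + 2 * s) (by positivity)
    (norm_pos_iff.2 (sub_ne_zero.2 hay.symm)) (norm_sub_le_reflFirst n ha hy)
  unfold aKernel
  refine h.trans (le_of_eq ?_)
  rw [norm_sq_reflFirst_sub]; ring

lemma aKernel_nonneg (n : ℕ) [NeZero n] {s : ℝ} (hs : 0 < s) {a y : Euc n} (ha : 0 ≤ a 0)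
    (hy : 0 ≤ y 0) (hay : y ≠ a) : 0 ≤ aKernel n s a y := by
  unfold aKernel
  have := Real.rpow_le_rpow_of_nonpos (norm_pos_iff.2 (sub_ne_zero.2 hay.symm))
    (norm_sub_le_reflFirst n ha hy) (z := -((n : ℝ) + 2 * s))
    (by have : (0 : ℝ) ≤ n := n.cast_nonneg
        linarith)
  linarith

lemma le_aKernel (n : ℕ) [NeZero n] {s : ℝ} (hs : 0 < s) {a y : Euc n} (ha : 0 ≤ a 0)
    (hy : 0 ≤ y 0) (hay : y ≠ a) :
    ‖a - y‖ ^ (-((n : ℝ) + 2 * s)) * (2 * a 0 * y 0 / ‖reflFirst n a - y‖ ^ 2)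
      ≤ aKernel n s a y := by
  have hn : (1 : ℝ) ≤ n := by exact_mod_cast NeZero.one_le
  have h := le_rpow_neg_sub (p := (n : ℝ) + 2 * s) (by linarith)
    (norm_pos_iff.2 (sub_ne_zero.2 hay.symm)) (norm_sub_le_reflFirst n ha hy)
  unfold aKernel
  refine le_trans (le_of_eq ?_) h
  have : ‖reflFirst n a - y‖ ^ 2 - ‖a - y‖ ^ 2 = 4 * a 0 * y 0 := by
    rw [norm_sq_reflFirst_sub]; ring
  rw [this]
  congr 1
  rw [show 4 * a 0 * y 0 = 2 * (2 * a 0 * y 0) by ring, mul_div_mul_left _ _ two_ne_zero]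

/-! ### Mass of the reflected kernel -/

lemma lintegral_gamma {q r : ℝ} (hq : 0 < q) (hr : 0 < r) :
    ∫⁻ t in Set.Ioi (0 : ℝ), ENNReal.ofReal (t ^ (q - 1) * Real.exp (-(r * t)))
      = ENNReal.ofReal ((1 / r) ^ q * Real.Gamma q) := by
  have h := Real.integral_rpow_mul_exp_neg_mul_Ioi hq hr
  have hpos : 0 < (1 / r) ^ q * Real.Gamma q :=
    mul_pos (Real.rpow_pos_of_pos (by positivity) _) (Real.Gamma_pos_of_pos hq)
  have hInt : IntegrableOn (fun t : ℝ => t ^ (q - 1) * Real.exp (-(r * t))) (Set.Ioi 0) := by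
    by_contra hc
    rw [integral_undef hc] at h
    exact hpos.ne h
  rw [← h, ofReal_integral_eq_lintegral_ofReal hInt]
  filter_upwards [ae_restrict_mem measurableSet_Ioi] with t ht
  have ht : 0 < t := ht
  simp only [Pi.zero_apply]
  positivity

/-- The Gaussian integral over `{z₁ > h}` factorises over the coordinates. -/
lemma lintegral_gaussian_half (n : ℕ) [NeZero n] (h : ℝ) {t : ℝ} (ht : 0 < t) :
    ∫⁻ z in {z : Euc n | h < z 0}, ENNReal.ofReal (Real.exp (-(‖z‖ ^ 2 * t)))
      = ENNReal.ofReal ((Real.pi / t) ^ (((n : ℝ) - 1) / 2)) *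
        ∫⁻ x in Set.Ioi h, ENNReal.ofReal (Real.exp (-(x ^ 2 * t))) := by
  set g : ℝ → ℝ := fun x => Real.exp (-t * x ^ 2) with hg
  have hgi : Integrable g := integrable_exp_neg_mul_sq ht
  set f : Fin n → ℝ → ℝ := fun i => if i = 0 then (Set.Ioi h).indicator g else g with hf
  have hfi : ∀ i, Integrable (f i) := by
    intro i
    by_cases hi : i = 0
    · simp only [hf, hi, if_true]; exact hgi.indicator measurableSet_Ioi
    · simp only [hf, hi, if_false]; exact hgi
  have hprod : Integrable (fun x : Fin n → ℝ => ∏ i, f i (x i)) := Integrable.fintype_prod hfi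
  have hfn : ∀ i x, 0 ≤ f i x := by
    intro i x
    by_cases hi : i = 0
    · simp only [hf, hi, if_true]; exact Set.indicator_nonneg (fun _ _ => (Real.exp_pos _).le) _
    · simp only [hf, hi, if_false]; exact (Real.exp_pos _).le
  have hm : MeasurableSet {z : Euc n | h < z 0} :=
    (isOpen_lt continuous_const (by fun_prop)).measurableSet
  have key : ∀ x : Fin n → ℝ, ({z : Euc n | h < z 0}.indicator
      (fun z => ENNReal.ofReal (Real.exp (-(‖z‖ ^ 2 * t))))) (WithLp.toLp 2 x)
      = ENNReal.ofReal (∏ i, f i (x i)) := by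
    intro x
    by_cases hx : h < x 0
    · rw [Set.indicator_of_mem (by simpa using hx)]
      have : ∀ i, f i (x i) = Real.exp (-t * x i ^ 2) := by
        intro i
        by_cases hi : i = 0
        · subst hi
          have : x 0 ∈ Set.Ioi h := hx
          simp [hf, this, hg]
        · simp [hf, hi, hg]
      simp_rw [this]
      rw [← Real.exp_sum, ← Finset.mul_sum, EuclideanSpace.norm_sq_eq]
      simp; ring_nf
    · rw [Set.indicator_of_notMem (by simpa using hx)]
      have : f 0 (x 0) = 0 := by
        have : x 0 ∉ Set.Ioi h := hx
        simp [hf, this]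
      rw [Finset.prod_eq_zero (Finset.mem_univ 0) this]; simp
  rw [← lintegral_indicator hm, ← (PiLp.volume_preserving_toLp (Fin n)).lintegral_comp_emb
    (MeasurableEquiv.toLp 2 (Fin n → ℝ)).measurableEmbedding]
  simp_rw [key]
  rw [← ofReal_integral_eq_lintegral_ofReal hprod
      (Eventually.of_forall fun x => Finset.prod_nonneg fun i _ => hfn i _),
    integral_fintype_prod_volume_eq_prod, Fintype.prod_eq_mul_prod_compl 0]
  have h0 : ∫ x, f 0 x = ∫ x in Set.Ioi h, g x := by
    simp [hf, integral_indicator measurableSet_Ioi]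
  have h1 : ∏ i ∈ ({0} : Finset (Fin n))ᶜ, ∫ x, f i x = (Real.pi / t) ^ (((n : ℝ) - 1) / 2) := by
    have : ∀ i ∈ ({0} : Finset (Fin n))ᶜ, ∫ x, f i x = √(Real.pi / t) := by
      intro i hi
      have : i ≠ 0 := by simpa using hi
      simp only [hf, this, if_false, hg]
      exact integral_gaussian t
    rw [Finset.prod_congr rfl this, Finset.prod_const, Finset.card_compl, Finset.card_singleton,
      Fintype.card_fin, Real.sqrt_eq_rpow, ← Real.rpow_natCast, ← Real.rpow_mul (by positivity),
      Nat.cast_sub NeZero.one_le]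
    congr 1; push_cast; ring
  rw [h0, h1, mul_comm, ENNReal.ofReal_mul (by positivity),
    ofReal_integral_eq_lintegral_ofReal hgi.integrableOn
      (Eventually.of_forall fun x => (Real.exp_pos _).le)]
  congr 2
  ext x
  simp only [hg]
  congr 2; ring

/-- Power-kernel mass of the half space `{z₁ > h}`, computed by writing the power as a Gamma
integral of Gaussians and exchanging the integrals. -/
lemma lintegral_half_rpow (n : ℕ) [NeZero n] {s h : ℝ} (hs : 0 < s) (hh : 0 < h) :
    ∫⁻ z in {z : Euc n | h < z 0}, ENNReal.ofReal (‖z‖ ^ (-((n : ℝ) + 2 * s)))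
      = ENNReal.ofReal (Real.pi ^ (((n : ℝ) - 1) / 2) * Real.Gamma (s + 1 / 2) /
          Real.Gamma (((n : ℝ) + 2 * s) / 2) * (h ^ (-(2 * s)) / (2 * s))) := by
  have hn : (1 : ℝ) ≤ n := by exact_mod_cast NeZero.one_le
  set q : ℝ := ((n : ℝ) + 2 * s) / 2 with hq
  have hq0 : 0 < q := by positivity
  have hΓ : 0 < Real.Gamma q := Real.Gamma_pos_of_pos hq0
  have hΓ' : 0 < Real.Gamma (s + 1 / 2) := Real.Gamma_pos_of_pos (by positivity)
  have hm : MeasurableSet {z : Euc n | h < z 0} :=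
    (isOpen_lt continuous_const (by fun_prop)).measurableSet
  -- the identity multiplied by `Γ(q)`
  have main : ∫⁻ z in {z : Euc n | h < z 0},
      ENNReal.ofReal (‖z‖ ^ (-((n : ℝ) + 2 * s)) * Real.Gamma q) =
      ENNReal.ofReal (Real.pi ^ (((n : ℝ) - 1) / 2) * Real.Gamma (s + 1 / 2) *
        (h ^ (-(2 * s)) / (2 * s))) := by
    calc _ = ∫⁻ z in {z : Euc n | h < z 0}, ∫⁻ t in Set.Ioi (0 : ℝ),
          ENNReal.ofReal (t ^ (q - 1) * Real.exp (-(‖z‖ ^ 2 * t))) := by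
          refine setLIntegral_congr_fun hm fun z hz => ?_
          have hz : h < z 0 := hz
          have hzn : 0 < ‖z‖ := by
            have := abs_coord_le_norm z 0
            have := le_abs_self (z 0)
            linarith
          rw [lintegral_gamma hq0 (by positivity)]
          congr 2
          rw [one_div, Real.inv_rpow (by positivity), ← Real.rpow_natCast, ← Real.rpow_mul hzn.le,
            ← Real.rpow_neg hzn.le]
          congr 1; rw [hq]; push_cast; ring
      _ = ∫⁻ t in Set.Ioi (0 : ℝ), ∫⁻ z in {z : Euc n | h < z 0},
          ENNReal.ofReal (t ^ (q - 1) * Real.exp (-(‖z‖ ^ 2 * t))) := by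
          rw [lintegral_lintegral_swap]
          fun_prop
      _ = ∫⁻ t in Set.Ioi (0 : ℝ), ∫⁻ x in Set.Ioi h, ENNReal.ofReal
          (Real.pi ^ (((n : ℝ) - 1) / 2) * (t ^ (s + 1 / 2 - 1) * Real.exp (-(x ^ 2 * t)))) := by
          refine setLIntegral_congr_fun measurableSet_Ioi fun t ht => ?_
          have ht : 0 < t := ht
          have : ∀ c : ℝ, ENNReal.ofReal (t ^ (q - 1) * c)
            = ENNReal.ofReal (t ^ (q - 1)) * ENNReal.ofReal c :=
              fun c => ENNReal.ofReal_mul (by positivity)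
          simp_rw [this]
          rw [lintegral_const_mul' _ _ ENNReal.ofReal_ne_top, lintegral_gaussian_half n h ht,
            ← mul_assoc, ← ENNReal.ofReal_mul (by positivity),
            ← lintegral_const_mul' _ _ ENNReal.ofReal_ne_top]
          refine lintegral_congr fun x => ?_
          rw [← ENNReal.ofReal_mul (by positivity)]
          congr 1
          rw [← mul_assoc]
          congr 1
          rw [Real.div_rpow Real.pi_pos.le ht.le, mul_div_assoc', mul_comm, mul_div_assoc]
          congr 1
          rw [← Real.rpow_sub ht]
          congr 1; rw [hq]; ring
      _ = ∫⁻ x in Set.Ioi h, ∫⁻ t in Set.Ioi (0 : ℝ), ENNReal.ofReal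
          (Real.pi ^ (((n : ℝ) - 1) / 2) * (t ^ (s + 1 / 2 - 1) * Real.exp (-(x ^ 2 * t)))) := by
          rw [lintegral_lintegral_swap]
          fun_prop
      _ = ∫⁻ x in Set.Ioi h, ENNReal.ofReal
          (Real.pi ^ (((n : ℝ) - 1) / 2) * Real.Gamma (s + 1 / 2) * x ^ (-(2 * s) - 1)) := by
          refine setLIntegral_congr_fun measurableSet_Ioi fun x hx => ?_
          have hx : 0 < x := hh.trans hx
          have : ∀ c : ℝ, ENNReal.ofReal (Real.pi ^ (((n : ℝ) - 1) / 2) * c)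
            = ENNReal.ofReal (Real.pi ^ (((n : ℝ) - 1) / 2)) * ENNReal.ofReal c :=
              fun c => ENNReal.ofReal_mul (by positivity)
          simp_rw [this]
          rw [lintegral_const_mul' _ _ ENNReal.ofReal_ne_top,
            lintegral_gamma (by positivity) (by positivity), ← ENNReal.ofReal_mul (by positivity)]
          congr 1
          have : (1 / x ^ 2) ^ (s + 1 / 2) = x ^ (-(2 * s) - 1) := by
            rw [one_div, Real.inv_rpow (by positivity), ← Real.rpow_natCast,
              ← Real.rpow_mul hx.le, ← Real.rpow_neg hx.le]
            congr 1; push_cast; ring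
          rw [this]; ring
      _ = _ := by
          rw [← ofReal_integral_eq_lintegral_ofReal]
          · rw [integral_const_mul, integral_Ioi_rpow_of_lt (by linarith) hh]
            congr 2
            rw [show -(2 * s) - 1 + 1 = -(2 * s) by ring, neg_div_neg_eq]
          · exact (integrableOn_Ioi_rpow_of_lt (by linarith) hh).const_mul _
          · filter_upwards [ae_restrict_mem measurableSet_Ioi] with x hx
            have hx : 0 < x := hh.trans hx
            simp only [Pi.zero_apply]
            positivity
  have e : ∀ z : Euc n, ENNReal.ofReal (‖z‖ ^ (-((n : ℝ) + 2 * s))) =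
      ENNReal.ofReal (Real.Gamma q)⁻¹ *
        ENNReal.ofReal (‖z‖ ^ (-((n : ℝ) + 2 * s)) * Real.Gamma q) := by
    intro z
    rw [← ENNReal.ofReal_mul (by positivity)]
    congr 1; field_simp
  simp_rw [e]
  rw [lintegral_const_mul' _ _ ENNReal.ofReal_ne_top, main, ← ENNReal.ofReal_mul (by positivity)]
  congr 1; field_simp

/-- The zeroth-order coefficient of the antisymmetric fractional Laplacian is the mass of the
reflected kernel over the half space. -/
lemma reflected_kernel_mass (n : ℕ) [NeZero n] {s : ℝ} (hs : s ∈ Set.Ioo (0 : ℝ) 1)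
    {a : Euc n} (ha : 0 < a 0) :
    IntegrableOn (fun y => ‖reflFirst n a - y‖ ^ (-((n : ℝ) + 2 * s))) (halfSpace n) ∧
    cns n s * (2 * ∫ y in halfSpace n, ‖reflFirst n a - y‖ ^ (-((n : ℝ) + 2 * s)))
      = cns 1 s / s * (a 0) ^ (-(2 * s)) := by
  obtain ⟨hs0, hs1⟩ := hs
  have hn : (1 : ℝ) ≤ n := by exact_mod_cast NeZero.one_le
  have hΓ : 0 < Real.Gamma (((n : ℝ) + 2 * s) / 2) := Real.Gamma_pos_of_pos (by positivity)
  have hΓ' : 0 < Real.Gamma (s + 1 / 2) := Real.Gamma_pos_of_pos (by positivity)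
  have hΓ'' : 0 < Real.Gamma (1 - s) := Real.Gamma_pos_of_pos (by linarith)
  set V : ℝ := Real.pi ^ (((n : ℝ) - 1) / 2) * Real.Gamma (s + 1 / 2) /
          Real.Gamma (((n : ℝ) + 2 * s) / 2) * ((a 0) ^ (-(2 * s)) / (2 * s)) with hV
  have hVpos : 0 < V := by positivity
  have hl : ∫⁻ y in halfSpace n, ENNReal.ofReal (‖reflFirst n a - y‖ ^ (-((n : ℝ) + 2 * s)))
      = ENNReal.ofReal V := by
    rw [hV, ← lintegral_half_rpow n hs0 ha]
    have hm : MeasurableSet {z : Euc n | a 0 < z 0} :=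
      (isOpen_lt continuous_const (by fun_prop)).measurableSet
    rw [← lintegral_indicator (measurableSet_halfSpace n), ← lintegral_indicator hm,
      ← lintegral_sub_right_eq_self ({z : Euc n | a 0 < z 0}.indicator _) (reflFirst n a)]
    refine lintegral_congr fun y => ?_
    have : y ∈ halfSpace n ↔ y - reflFirst n a ∈ {z : Euc n | a 0 < z 0} := by
      simp [halfSpace, reflFirst_zero]
    by_cases hy : y ∈ halfSpace n
    · rw [Set.indicator_of_mem hy, Set.indicator_of_mem (this.1 hy), norm_sub_rev]
    · rw [Set.indicator_of_notMem hy, Set.indicator_of_notMem (fun h => hy (this.2 h))]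
  have hInt : IntegrableOn (fun y => ‖reflFirst n a - y‖ ^ (-((n : ℝ) + 2 * s)))
      (halfSpace n) := by
    refine ⟨(Measurable.aestronglyMeasurable (by fun_prop)), ?_⟩
    rw [hasFiniteIntegral_iff_ofReal (Eventually.of_forall fun y => by positivity), hl]
    exact ENNReal.ofReal_lt_top
  refine ⟨hInt, ?_⟩
  have hv : ∫ y in halfSpace n, ‖reflFirst n a - y‖ ^ (-((n : ℝ) + 2 * s)) = V := by
    rw [← ENNReal.ofReal_eq_ofReal_iff (integral_nonneg fun y => by positivity) hVpos.le, ← hl,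
      ofReal_integral_eq_lintegral_ofReal hInt (Eventually.of_forall fun y => by positivity)]
  rw [hv, hV]
  unfold cns
  have e1 : Real.pi ^ ((n : ℝ) / 2) = Real.pi ^ (((n : ℝ) - 1) / 2) * Real.pi ^ ((1 : ℝ) / 2) := by
    rw [← Real.rpow_add Real.pi_pos]; congr 1; ring
  have e2 : (((1 : ℕ) : ℝ) + 2 * s) / 2 = s + 1 / 2 := by push_cast; ring
  rw [e1, e2, Nat.cast_one]
  have h1 : 0 < Real.pi ^ (((n : ℝ) - 1) / 2) := by positivity
  have h2 : 0 < Real.pi ^ ((1 : ℝ) / 2) := by positivity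
  field_simp

lemma cns_pos (n : ℕ) {s : ℝ} (hs : s ∈ Set.Ioo (0 : ℝ) 1) : 0 < cns n s := by
  obtain ⟨hs0, hs1⟩ := hs
  have hΓ : 0 < Real.Gamma (((n : ℝ) + 2 * s) / 2) := Real.Gamma_pos_of_pos (by positivity)
  have hΓ'' : 0 < Real.Gamma (1 - s) := Real.Gamma_pos_of_pos (by linarith)
  unfold cns
  positivity

/-! ### The barrier and its symmetrised second differences -/

lemma inv_one_sub_le {ξ : ℝ} (h : |ξ| ≤ 1 / 2) : (1 - ξ)⁻¹ ≤ 1 + ξ + 2 * ξ ^ 2 := by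
  obtain ⟨h1, h2⟩ := abs_le.1 h
  rw [inv_le_iff_one_le_mul₀ (by linarith)]
  nlinarith [sq_nonneg ξ]

/-- Second-order Taylor bound for `ξ ↦ (1 - ξ)⁻ᵏ` at `0`. -/
lemma exists_taylor_bound (k : ℕ) : ∃ C : ℝ, 0 ≤ C ∧ ∀ ξ : ℝ, |ξ| ≤ 1 / 2 →
    ((1 - ξ) ^ k)⁻¹ ≤ 1 + k * ξ + C * ξ ^ 2 := by
  induction k with
  | zero => exact ⟨0, le_rfl, fun ξ _ => by simp⟩
  | succ k ih =>
    obtain ⟨C, hC, h⟩ := ih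
    refine ⟨k + 2 + k + 2 * C, by positivity, fun ξ hξ => ?_⟩
    have h1 := h ξ hξ
    have h2 := inv_one_sub_le hξ
    obtain ⟨h3, h4⟩ := abs_le.1 hξ
    have h5 : 0 < 1 - ξ := by linarith
    rw [pow_succ, mul_inv]
    have h6 : 0 < ((1 - ξ) ^ k)⁻¹ := by positivity
    have h7 : 0 < (1 - ξ)⁻¹ := by positivity
    have h8 : ((1 - ξ) ^ k)⁻¹ * (1 - ξ)⁻¹ ≤ (1 + k * ξ + C * ξ ^ 2) * (1 + ξ + 2 * ξ ^ 2) :=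
      mul_le_mul h1 h2 h7.le (by linarith)
    refine h8.trans ?_
    have hk : (0 : ℝ) ≤ k := k.cast_nonneg
    have h9 : 0 ≤ k * ξ ^ 2 := by positivity
    have h10 : 0 ≤ C * ξ ^ 2 := by positivity
    have h11 : 2 * ξ ^ 2 ≤ 1 / 2 := by nlinarith
    push_cast
    nlinarith

lemma exists_lipschitz_bound (k : ℕ) : ∃ C : ℝ, 0 ≤ C ∧ ∀ ξ η : ℝ, |ξ| ≤ 1 / 2 → |η| ≤ 1 / 2 →
    |((1 - ξ) ^ k)⁻¹ - ((1 - η) ^ k)⁻¹| ≤ C * |ξ - η| := by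
  refine ⟨4 * k * 2 ^ (k - 1), by positivity, fun ξ η hξ hη => ?_⟩
  obtain ⟨h1, h2⟩ := abs_le.1 hξ
  obtain ⟨h3, h4⟩ := abs_le.1 hη
  have hp : 0 < 1 - ξ := by linarith
  have hq : 0 < 1 - η := by linarith
  have b1 : (1 - ξ)⁻¹ ≤ 2 := by rw [inv_le_comm₀ hp two_pos]; linarith
  have b2 : (1 - η)⁻¹ ≤ 2 := by rw [inv_le_comm₀ hq two_pos]; linarith
  rw [← inv_pow, ← inv_pow]
  refine (abs_pow_sub_pow_le _ _ _).trans ?_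
  have e : (1 - ξ)⁻¹ - (1 - η)⁻¹ = (ξ - η) * ((1 - ξ)⁻¹ * (1 - η)⁻¹) := by
    field_simp; ring
  have i1 : |(1 - ξ)⁻¹ - (1 - η)⁻¹| ≤ |ξ - η| * 4 := by
    rw [e, abs_mul, abs_of_nonneg (by positivity : 0 ≤ (1 - ξ)⁻¹ * (1 - η)⁻¹)]
    gcongr
    have := mul_le_mul b1 b2 (by positivity) (by norm_num)
    linarith
  have i2 : max |(1 - ξ)⁻¹| |(1 - η)⁻¹| ≤ 2 := by
    rw [abs_of_pos (inv_pos.2 hp), abs_of_pos (inv_pos.2 hq)]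
    exact max_le b1 b2
  calc _ ≤ (|ξ - η| * 4) * k * 2 ^ (k - 1) := by gcongr
    _ = _ := by ring

/-- The barrier profile `y₁ (m - |y|²)⁻ᵏ`: antisymmetric and blowing up at `|y|² = m`. -/
def bar (n : ℕ) [NeZero n] (m : ℝ) (k : ℕ) (y : Euc n) : ℝ := y 0 * ((m - ‖y‖ ^ 2) ^ k)⁻¹

lemma bar_reflFirst (n : ℕ) [NeZero n] (m : ℝ) (k : ℕ) (y : Euc n) :
    bar n m k (reflFirst n y) = - bar n m k y := by
  simp [bar, reflFirst_zero, reflFirst_norm]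

/-- Relative change of `m - |·|²` between `a` and `a + z`, where `D = m - |a|²`. -/
def relChange {n : ℕ} (D : ℝ) (a z : Euc n) : ℝ := (2 * inner ℝ a z + ‖z‖ ^ 2) / D

lemma relChange_spec {n : ℕ} {m D : ℝ} {a : Euc n} (hD : D = m - ‖a‖ ^ 2) (hD0 : 0 < D)
    (z : Euc n) : m - ‖a + z‖ ^ 2 = D * (1 - relChange D a z) := by
  unfold relChange
  rw [norm_add_sq_real]
  field_simp
  rw [hD]; ring

lemma abs_relChange_le {n : ℕ} {m D : ℝ} {a : Euc n} (hm : m ≤ 1) (hD : D = m - ‖a‖ ^ 2)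
    (hD0 : 0 < D) {z : Euc n} (hz : ‖z‖ ≤ D / 6) : |relChange D a z| ≤ 3 * ‖z‖ / D := by
  have ha : ‖a‖ ≤ 1 := by nlinarith [norm_nonneg a]
  have hz1 : ‖z‖ ≤ 1 := by nlinarith [norm_nonneg a]
  unfold relChange
  rw [abs_div, abs_of_pos hD0]
  gcongr
  have h1 := abs_real_inner_le_norm a z
  have h2 : ‖a‖ * ‖z‖ ≤ 1 * ‖z‖ := by gcongr
  calc |2 * inner ℝ a z + ‖z‖ ^ 2| ≤ |2 * inner ℝ a z| + |‖z‖ ^ 2| := abs_add_le _ _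
    _ ≤ 2 * ‖z‖ + ‖z‖ := by
        rw [abs_mul, abs_two, abs_of_nonneg (sq_nonneg ‖z‖)]
        nlinarith [norm_nonneg z]
    _ = _ := by ring

lemma three_mul_div_le {D r : ℝ} (hD0 : 0 < D) (hz : r ≤ D / 6) : 3 * r / D ≤ 1 / 2 := by
  rw [div_le_iff₀ hD0]; linarith

/-- Second-order bound for the barrier, symmetrised over `z, z_*, -z, -z_*`. The symmetrisation
is what makes the error proportional to `a₁`. -/
lemma exists_bar_symm (n : ℕ) [NeZero n] (k : ℕ) : ∃ C : ℝ, 0 ≤ C ∧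
    ∀ (m D : ℝ) (a z : Euc n), m ≤ 1 → D = m - ‖a‖ ^ 2 → 0 < D → 0 ≤ a 0 → ‖z‖ ≤ D / 6 →
      bar n m k (a + z) + bar n m k (a + reflFirst n z) + bar n m k (a + -z)
        + bar n m k (a + - reflFirst n z)
        ≤ 4 * bar n m k a + C * (a 0 * (D ^ (k + 2))⁻¹) * ‖z‖ ^ 2 := by
  obtain ⟨C1, hC1, h1⟩ := exists_taylor_bound k
  obtain ⟨C2, hC2, h2⟩ := exists_lipschitz_bound k
  refine ⟨4 * k + 36 * C1 + 8 * C2, by positivity, fun m D a z hm hD hD0 ha hz => ?_⟩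
  have hD1 : D ≤ 1 := by nlinarith [norm_nonneg a]
  have e : ∀ w : Euc n, bar n m k (a + w) =
      (D ^ k)⁻¹ * ((a 0 + w 0) * ((1 - relChange D a w) ^ k)⁻¹) := by
    intro w
    rw [bar, relChange_spec hD hD0, mul_pow, mul_inv]
    simp; ring
  have e0 : bar n m k a = (D ^ k)⁻¹ * a 0 := by rw [bar, ← hD, mul_comm]
  set E : Euc n → ℝ := fun w => ((1 - relChange D a w) ^ k)⁻¹ with hE
  have hr : ∀ w : Euc n, ‖w‖ = ‖z‖ → |relChange D a w| ≤ 3 * ‖z‖ / D := fun w hw => by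
    rw [← hw]; exact abs_relChange_le hm hD hD0 (by rw [hw]; exact hz)
  have hr' : ∀ w : Euc n, ‖w‖ = ‖z‖ → |relChange D a w| ≤ 1 / 2 := fun w hw =>
    (hr w hw).trans (three_mul_div_le hD0 hz)
  have hT : ∀ w : Euc n, ‖w‖ = ‖z‖ →
      E w ≤ 1 + k * relChange D a w + C1 * (3 * ‖z‖ / D) ^ 2 := fun w hw => by
    refine (h1 _ (hr' w hw)).trans ?_
    gcongr 1 + _ + C1 * ?_
    rw [← sq_abs]
    gcongr
    exact hr w hw
  have hL : ∀ w : Euc n, ‖w‖ = ‖z‖ →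
      w 0 * (E w - E (reflFirst n w)) ≤ 4 * C2 * a 0 * ‖z‖ ^ 2 / D := fun w hw => by
    have := h2 _ _ (hr' w hw) (hr' (reflFirst n w) (by rw [reflFirst_norm, hw]))
    have e3 : relChange D a w - relChange D a (reflFirst n w) = 4 * a 0 * w 0 / D := by
      unfold relChange
      rw [reflFirst_norm, ← sub_div]
      congr 1
      rw [reflFirst, inner_sub_right, inner_smul_right, EuclideanSpace.inner_single_right]
      simp; ring
    rw [e3, abs_div, abs_mul, abs_of_pos hD0, abs_of_nonneg (by positivity : 0 ≤ 4 * a 0)] at this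
    calc w 0 * (E w - E (reflFirst n w)) ≤ |w 0| * |E w - E (reflFirst n w)| := by
          rw [← abs_mul]; exact le_abs_self _
      _ ≤ |w 0| * (C2 * (4 * a 0 * |w 0| / D)) := by gcongr
      _ = 4 * C2 * a 0 * |w 0| ^ 2 / D := by ring
      _ ≤ _ := by
        gcongr
        rw [← hw]; exact abs_coord_le_norm w 0
  have n2 : ‖-z‖ = ‖z‖ := norm_neg z
  have n3 : ‖reflFirst n z‖ = ‖z‖ := reflFirst_norm n z
  have n4 : ‖-reflFirst n z‖ = ‖z‖ := by rw [norm_neg, n3]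
  have t1 := hT z rfl
  have t2 := hT _ n2
  have t3 := hT _ n3
  have t4 := hT _ n4
  have l1 := hL z rfl
  have l2 := hL _ n2
  have hsum : relChange D a z + relChange D a (-z) + relChange D a (reflFirst n z)
      + relChange D a (-reflFirst n z) = 4 * ‖z‖ ^ 2 / D := by
    unfold relChange
    rw [n2, n3, n4, inner_neg_right, inner_neg_right]; ring
  rw [reflFirst_neg] at l2
  rw [e, e, e, e, e0]
  have c3 : reflFirst n z 0 = - z 0 := reflFirst_zero n z
  have c4 : (-reflFirst n z) 0 = z 0 := by simp [reflFirst_zero]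
  have c2 : (-z) 0 = - z 0 := by simp
  rw [c3, c4, c2]
  rw [c2] at l2
  change (D ^ k)⁻¹ * ((a 0 + z 0) * E z) + (D ^ k)⁻¹ * ((a 0 + -z 0) * E (reflFirst n z)) +
    (D ^ k)⁻¹ * ((a 0 + -z 0) * E (-z)) + (D ^ k)⁻¹ * ((a 0 + z 0) * E (-reflFirst n z)) ≤ _
  have hDk : 0 < (D ^ k)⁻¹ := by positivity
  have s1 : a 0 * (E z + E (-z) + E (reflFirst n z) + E (-reflFirst n z)) ≤
      a 0 * (4 + k * (4 * ‖z‖ ^ 2 / D) + 4 * (C1 * (3 * ‖z‖ / D) ^ 2)) := by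
    refine mul_le_mul_of_nonneg_left ?_ ha
    rw [← hsum]; linarith
  have s2 : ‖z‖ ^ 2 / D ≤ ‖z‖ ^ 2 / D ^ 2 := by
    gcongr; nlinarith
  have key : (a 0 + z 0) * E z + (a 0 + -z 0) * E (reflFirst n z) +
      (a 0 + -z 0) * E (-z) + (a 0 + z 0) * E (-reflFirst n z) ≤
      4 * a 0 + (4 * k + 36 * C1 + 8 * C2) * a 0 * (‖z‖ ^ 2 / D ^ 2) := by
    have s3 : (k * 4 * a 0 + 8 * C2 * a 0) * (‖z‖ ^ 2 / D) ≤
      (k * 4 * a 0 + 8 * C2 * a 0) * (‖z‖ ^ 2 / D ^ 2) := by gcongr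
    have e5 : a 0 * (4 + k * (4 * ‖z‖ ^ 2 / D) + 4 * (C1 * (3 * ‖z‖ / D) ^ 2)) =
      4 * a 0 + k * 4 * a 0 * (‖z‖ ^ 2 / D) + 36 * C1 * a 0 * (‖z‖ ^ 2 / D ^ 2) := by
      field_simp; ring
    have e6 : 4 * C2 * a 0 * ‖z‖ ^ 2 / D = 4 * C2 * a 0 * (‖z‖ ^ 2 / D) := by ring
    rw [e5] at s1
    rw [e6] at l1 l2
    nlinarith
  calc _ = (D ^ k)⁻¹ * ((a 0 + z 0) * E z + (a 0 + -z 0) * E (reflFirst n z) +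
      (a 0 + -z 0) * E (-z) + (a 0 + z 0) * E (-reflFirst n z)) := by ring
    _ ≤ (D ^ k)⁻¹ * (4 * a 0 + (4 * k + 36 * C1 + 8 * C2) * a 0 * (‖z‖ ^ 2 / D ^ 2)) :=
      mul_le_mul_of_nonneg_left key hDk.le
    _ = _ := by field_simp; ring

/-! ### Integrals of the barrier near the touching point -/

lemma integrableOn_norm_rpow (n : ℕ) [NeZero n] {s : ℝ} (hs : s < 1) (R : ℝ) :
    IntegrableOn (fun z : Euc n => ‖z‖ ^ (2 - ((n : ℝ) + 2 * s))) (ball 0 R) := by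
  have hnt : Nontrivial (Euc n) := ⟨⟨0, e1 n, fun h => by
    simpa [e1] using congrArg (fun x : Euc n => x 0) h⟩⟩
  refine (integrableOn_fun_norm_addHaar (volume : Measure (Euc n))
    (f := fun t : ℝ => t ^ (2 - ((n : ℝ) + 2 * s))) (r := R)).2 ?_
  rcases le_or_gt R 0 with hR | hR
  · simp [Set.Ioo_eq_empty (not_lt.2 hR)]
  have h := (intervalIntegral.intervalIntegrable_rpow' (a := 0) (b := R) (r := 1 - 2 * s)
    (by linarith)).1
  refine (h.mono_set Set.Ioo_subset_Ioc_self).congr_fun (fun t ht => ?_) measurableSet_Ioo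
  simp only [finrank_euclideanSpace, Fintype.card_fin, smul_eq_mul]
  rw [← Real.rpow_natCast, ← Real.rpow_add ht.1, Nat.cast_sub NeZero.one_le]
  congr 1; push_cast; ring

lemma integral_norm_rpow_ball (n : ℕ) [NeZero n] (s : ℝ) {R : ℝ} (hR : 0 < R) :
    ∫ z in ball (0 : Euc n) R, ‖z‖ ^ (2 - ((n : ℝ) + 2 * s)) =
      R ^ (2 - 2 * s) * ∫ z in ball (0 : Euc n) 1, ‖z‖ ^ (2 - ((n : ℝ) + 2 * s)) := by
  have h := Measure.setIntegral_comp_smul_of_pos (volume : Measure (Euc n))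
    (fun z : Euc n => ‖z‖ ^ (2 - ((n : ℝ) + 2 * s))) (ball 0 1) hR
  rw [_root_.smul_ball hR.ne', smul_zero, Real.norm_of_nonneg hR.le, mul_one] at h
  simp only [finrank_euclideanSpace, Fintype.card_fin, smul_eq_mul, norm_smul,
    Real.norm_of_nonneg hR.le] at h
  have e : ∀ z : Euc n, (R * ‖z‖) ^ (2 - ((n : ℝ) + 2 * s)) =
      R ^ (2 - ((n : ℝ) + 2 * s)) * ‖z‖ ^ (2 - ((n : ℝ) + 2 * s)) :=
    fun z => Real.mul_rpow hR.le (norm_nonneg _)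
  simp_rw [e] at h
  rw [integral_const_mul] at h
  have h2 : R ^ (2 - 2 * s) = R ^ n * R ^ (2 - ((n : ℝ) + 2 * s)) := by
    rw [← Real.rpow_natCast, ← Real.rpow_add hR]; congr 1; ring
  rw [h2, mul_assoc, h]
  field_simp

lemma continuousOn_bar (n : ℕ) [NeZero n] {m D R : ℝ} (k : ℕ) {a : Euc n} (hm : m ≤ 1)
    (hD : D = m - ‖a‖ ^ 2) (hD0 : 0 < D) (hR : R ≤ D / 6) :
    ContinuousOn (bar n m k) (closedBall a R) := by
  unfold bar
  refine ContinuousOn.mul (by fun_prop) (ContinuousOn.inv₀ (by fun_prop) fun y hy => ?_)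
  have hy' : ‖y - a‖ ≤ D / 6 := by
    rw [mem_closedBall, dist_eq_norm] at hy; exact hy.trans hR
  have h1 := relChange_spec hD hD0 (y - a)
  have h2 := (abs_relChange_le hm hD hD0 hy').trans (three_mul_div_le hD0 hy')
  rw [add_sub_cancel] at h1
  have := (abs_le.1 h2).2
  have : 0 < m - ‖y‖ ^ 2 := by rw [h1]; exact mul_pos hD0 (by linarith)
  positivity

/-- Integral form of the symmetrised second-order bound on an annulus around `a`. -/
lemma exists_annulus_bound (n : ℕ) [NeZero n] (k : ℕ) {s : ℝ} (hs : s < 1) :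
    ∃ C : ℝ, 0 ≤ C ∧ ∀ (m D R δ : ℝ) (a : Euc n), m ≤ 1 → D = m - ‖a‖ ^ 2 → 0 < D → 0 ≤ a 0 →
      0 < R → R ≤ D / 6 → 0 < δ →
      IntegrableOn (fun y => ‖a - y‖ ^ (-((n : ℝ) + 2 * s)) * (bar n m k a - bar n m k y))
        (ball a R \ ball a δ) ∧
      - (C * (a 0 * (D ^ (k + 2))⁻¹) * R ^ (2 - 2 * s)) ≤
        ∫ y in ball a R \ ball a δ,
          ‖a - y‖ ^ (-((n : ℝ) + 2 * s)) * (bar n m k a - bar n m k y) := by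
  obtain ⟨C, hC, hsym⟩ := exists_bar_symm n k
  set κ := ∫ z in ball (0 : Euc n) 1, ‖z‖ ^ (2 - ((n : ℝ) + 2 * s)) with hκ
  have hκ0 : 0 ≤ κ := integral_nonneg fun z => by positivity
  refine ⟨C / 4 * κ, by positivity, fun m D R δ a hm hD hD0 ha hR hRD hδ => ?_⟩
  set A : Set (Euc n) := ball 0 R \ ball 0 δ with hA
  have hAm : MeasurableSet A := measurableSet_ball.diff measurableSet_ball
  set f : Euc n → ℝ := fun z => ‖z‖ ^ (-((n : ℝ) + 2 * s)) * (bar n m k a - bar n m k (a + z))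
    with hf
  have hpre : (fun z => a + z) ⁻¹' (ball a R \ ball a δ) = A := by
    ext z; simp [hA]
  have hcomp : (fun y => ‖a - y‖ ^ (-((n : ℝ) + 2 * s)) * (bar n m k a - bar n m k y)) ∘
      (fun z => a + z) = f := by
    ext z; simp [hf]
  have hmp : MeasurePreserving (fun z : Euc n => a + z) := measurePreserving_add_left volume a
  have hme : MeasurableEmbedding (fun z : Euc n => a + z) := measurableEmbedding_addLeft a
  have hfi : IntegrableOn f A := by
    have : IntegrableOn f (closedBall 0 R \ ball 0 δ) := by
      refine ContinuousOn.integrableOn_compact ((isCompact_closedBall _ _).diff isOpen_ball) ?_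
      refine ContinuousOn.mul ?_ (continuousOn_const.sub ?_)
      · refine ContinuousOn.rpow_const (by fun_prop) fun z hz => Or.inl ?_
        intro h0
        apply hz.2
        simpa [h0] using hδ
      · refine (continuousOn_bar n k hm hD hD0 hRD).comp (by fun_prop) fun z hz => ?_
        simpa using hz.1
    exact this.mono_set fun z hz => ⟨ball_subset_closedBall hz.1, hz.2⟩
  have hI : ∫ y in ball a R \ ball a δ,
      ‖a - y‖ ^ (-((n : ℝ) + 2 * s)) * (bar n m k a - bar n m k y) = ∫ z in A, f z := by
    rw [← hpre, ← hcomp]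
    exact (hmp.setIntegral_preimage_emb hme _ _).symm
  constructor
  · rw [← hmp.integrableOn_comp_preimage hme, hpre, hcomp]; exact hfi
  rw [hI]
  have hpr : reflFirst n ⁻¹' A = A := by
    ext z; simp [hA, reflFirst_norm]
  have hpn : (fun z : Euc n => -z) ⁻¹' A = A := by
    ext z; simp [hA]
  have hmn : MeasurePreserving (fun z : Euc n => -z) := Measure.measurePreserving_neg volume
  have hen : MeasurableEmbedding (fun z : Euc n => -z) :=
    (Homeomorph.neg (Euc n)).measurableEmbedding
  have hmr := measurePreserving_reflFirst n
  have her := measurableEmbedding_reflFirst n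
  have i2 : IntegrableOn (fun z => f (reflFirst n z)) A := by
    have := (hmr.integrableOn_comp_preimage her (f := f) (s := A)).2 hfi
    rwa [hpr] at this
  have i3 : IntegrableOn (fun z => f (-z)) A := by
    have := (hmn.integrableOn_comp_preimage hen (f := f) (s := A)).2 hfi
    rwa [hpn] at this
  have i4 : IntegrableOn (fun z => f (-reflFirst n z)) A := by
    have := (hmr.integrableOn_comp_preimage her (f := fun z => f (-z)) (s := A)).2 i3
    rwa [hpr] at this
  have e2 : ∫ z in A, f (reflFirst n z) = ∫ z in A, f z := by
    have := hmr.setIntegral_preimage_emb her f A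
    rwa [hpr] at this
  have e3 : ∫ z in A, f (-z) = ∫ z in A, f z := by
    have := hmn.setIntegral_preimage_emb hen f A
    rwa [hpn] at this
  have e4 : ∫ z in A, f (-reflFirst n z) = ∫ z in A, f z := by
    have := hmr.setIntegral_preimage_emb her (fun z => f (-z)) A
    rw [hpr] at this
    rw [this, e3]
  have hsum : ∫ z in A, (f z + f (reflFirst n z) + f (-z) + f (-reflFirst n z)) =
      4 * ∫ z in A, f z := by
    have j1 : IntegrableOn (fun z => f z + f (reflFirst n z)) A := hfi.add i2
    have j2 : IntegrableOn (fun z => f z + f (reflFirst n z) + f (-z)) A := j1.add i3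
    rw [integral_add j2 i4, integral_add j1 i3, integral_add hfi i2, e2, e3, e4]; ring
  set c : ℝ := C * (a 0 * (D ^ (k + 2))⁻¹) with hc
  have hc0 : 0 ≤ c := by positivity
  have hle : ∫ z in A, -(c * ‖z‖ ^ (2 - ((n : ℝ) + 2 * s))) ≤
      ∫ z in A, (f z + f (reflFirst n z) + f (-z) + f (-reflFirst n z)) := by
    refine setIntegral_mono_on ?_ ?_ hAm fun z hz => ?_
    · exact (((integrableOn_norm_rpow n hs R).mono_set Set.sdiff_subset).const_mul c).neg
    · exact ((hfi.add i2).add i3).add i4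
    · have hz0 : 0 < ‖z‖ := by
        have : δ ≤ ‖z‖ := by simpa [hA] using hz.2
        linarith
      have hzR : ‖z‖ ≤ D / 6 := by
        have : ‖z‖ < R := by simpa using hz.1
        linarith
      have := hsym m D a z hm hD hD0 ha hzR
      simp only [hf, norm_neg, reflFirst_norm]
      have hp : 0 < ‖z‖ ^ (-((n : ℝ) + 2 * s)) := by positivity
      have e5 : ‖z‖ ^ (2 - ((n : ℝ) + 2 * s)) = ‖z‖ ^ (-((n : ℝ) + 2 * s)) * ‖z‖ ^ 2 := by
        rw [← Real.rpow_natCast, ← Real.rpow_add hz0]; congr 1; push_cast; ring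
      rw [e5]
      have := mul_le_mul_of_nonneg_left this hp.le
      linarith
  have hle2 : ∫ z in A, c * ‖z‖ ^ (2 - ((n : ℝ) + 2 * s)) ≤ c * (R ^ (2 - 2 * s) * κ) := by
    rw [hκ, ← integral_norm_rpow_ball n s hR, ← integral_const_mul]
    refine setIntegral_mono_set ((integrableOn_norm_rpow n hs R).const_mul c) ?_ ?_
    · exact Eventually.of_forall fun z => by simp only [Pi.zero_apply]; positivity
    · exact Set.sdiff_subset.eventuallyLE
  rw [integral_neg, hsum] at hle
  linarith

lemma volume_hyperplane (n : ℕ) [NeZero n] : volume {y : Euc n | y 0 = 0} = 0 := by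
  have h := Measure.addHaar_submodule (volume : Measure (Euc n))
    (LinearMap.ker (EuclideanSpace.proj (0 : Fin n) : Euc n →L[ℝ] ℝ).toLinearMap) (by
      intro h
      have : (e1 n) ∈ LinearMap.ker (EuclideanSpace.proj (0 : Fin n) : Euc n →L[ℝ] ℝ).toLinearMap
        := by rw [h]; trivial
      simp [e1] at this)
  convert h using 2
  ext y
  simp

/-- The half-space integrals of the barrier dominate the full principal-value-type integral: the
part of `B_R(a)` below the hyperplane is reflected, and what is left over is nonnegative. -/
lemma half_integral_ge (n : ℕ) [NeZero n] (k : ℕ) {s m D R δ : ℝ} {a : Euc n} (hm : m ≤ 1)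
    (hD : D = m - ‖a‖ ^ 2) (hD0 : 0 < D) (ha : 0 < a 0) (hRD : R ≤ D / 6)
    (hInt : IntegrableOn (fun y => ‖a - y‖ ^ (-((n : ℝ) + 2 * s)) * (bar n m k a - bar n m k y))
        (ball a R \ ball a δ)) :
    IntegrableOn (fun y => ‖reflFirst n a - y‖ ^ (-((n : ℝ) + 2 * s)) *
      (bar n m k a + bar n m k y)) (ball a R ∩ halfSpace n) ∧
    ∫ y in ball a R \ ball a δ, ‖a - y‖ ^ (-((n : ℝ) + 2 * s)) * (bar n m k a - bar n m k y) ≤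
      (∫ y in (ball a R \ ball a δ) ∩ halfSpace n,
        ‖a - y‖ ^ (-((n : ℝ) + 2 * s)) * (bar n m k a - bar n m k y)) +
      ∫ y in ball a R ∩ halfSpace n,
        ‖reflFirst n a - y‖ ^ (-((n : ℝ) + 2 * s)) * (bar n m k a + bar n m k y) := by
  set g : Euc n → ℝ := fun y => ‖a - y‖ ^ (-((n : ℝ) + 2 * s)) * (bar n m k a - bar n m k y)
    with hg
  set g' : Euc n → ℝ := fun y => ‖reflFirst n a - y‖ ^ (-((n : ℝ) + 2 * s)) *
      (bar n m k a + bar n m k y) with hg'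
  have hi' : IntegrableOn g' (ball a R ∩ halfSpace n) := by
    have : IntegrableOn g' (closedBall a R ∩ {y | 0 ≤ y 0}) := by
      refine ContinuousOn.integrableOn_compact ((isCompact_closedBall _ _).inter_right
        (isClosed_le continuous_const (by fun_prop))) ?_
      refine ContinuousOn.mul ?_ (continuousOn_const.add ?_)
      · refine ContinuousOn.rpow_const (by fun_prop) fun z hz => Or.inl ?_
        rw [norm_ne_zero_iff, sub_ne_zero]
        rintro rfl
        have := hz.2
        simp [reflFirst_zero] at this
        linarith
      · exact (continuousOn_bar n k hm hD hD0 hRD).mono Set.inter_subset_left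
    exact this.mono_set fun z hz => ⟨ball_subset_closedBall hz.1, (show 0 < z 0 from hz.2).le⟩
  refine ⟨hi', ?_⟩
  have hH := measurableSet_halfSpace n
  rw [← integral_inter_add_sdiff hH hInt]
  gcongr ?_ + ?_
  · exact le_rfl
  have hcomp : ∀ y, g (reflFirst n y) = g' y := by
    intro y
    simp only [hg, hg', bar_reflFirst, norm_reflFirst_sub]
    ring
  have e := (measurePreserving_reflFirst n).setIntegral_preimage_emb
    (measurableEmbedding_reflFirst n) g ((ball a R \ ball a δ) \ halfSpace n)
  rw [← e]
  simp_rw [hcomp]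
  refine setIntegral_mono_set hi' ?_ ?_
  · filter_upwards [ae_restrict_mem (measurableSet_ball.inter hH)] with y hy
    have hb : 0 < bar n m k a := by
      unfold bar; rw [← hD]; positivity
    have hy' : ‖y - a‖ ≤ D / 6 := by
      have := hy.1
      rw [mem_ball, dist_eq_norm] at this; linarith
    have h1 := relChange_spec hD hD0 (y - a)
    have h2 := (abs_relChange_le hm hD hD0 hy').trans (three_mul_div_le hD0 hy')
    rw [add_sub_cancel] at h1
    have := (abs_le.1 h2).2
    have : 0 < m - ‖y‖ ^ 2 := by rw [h1]; exact mul_pos hD0 (by linarith)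
    have hy0 : 0 < y 0 := hy.2
    have hb' : 0 < bar n m k y := by unfold bar; positivity
    simp only [hg', Pi.zero_apply]
    positivity
  · have h0 : ∀ᵐ y : Euc n, y 0 ≠ 0 := by
      rw [ae_iff]; simpa using volume_hyperplane n
    filter_upwards [h0] with y hy0 hy
    have hy1 : reflFirst n y ∈ ball a R := hy.1.1
    have hy2 : ¬ (0 < reflFirst n y 0) := hy.2
    rw [reflFirst_zero] at hy2
    have hy3 : 0 < y 0 := lt_of_le_of_ne (by linarith) (Ne.symm hy0)
    refine ⟨?_, hy3⟩
    rw [mem_ball, dist_comm, dist_eq_norm] at hy1 ⊢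
    refine lt_of_le_of_lt ?_ hy1
    rw [← norm_reflFirst_sub]
    exact norm_sub_le_reflFirst n ha.le hy3.le

/-! ### Far-field estimates and the gain ball -/

lemma rpow_far_le {n : ℕ} {q η : ℝ} (hq : 0 ≤ q) (hη : 0 < η) (hη1 : η ≤ 1) {a y : Euc n}
    (ha : ‖a‖ ≤ 1) (hr : η ≤ ‖a - y‖) :
    ‖a - y‖ ^ (-q) ≤ 2 * (2 / η) ^ q / (1 + ‖y‖ ^ q) := by
  set r := ‖a - y‖ with hr'
  have hr0 : 0 < r := hη.trans_le hr
  have h1 : 1 ≤ r / η := (one_le_div hη).2 hr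
  have h2 : r ≤ r / η := le_div_self hr0.le hη hη1
  have hy : ‖y‖ ≤ 2 / η * r := by
    have : ‖y‖ ≤ ‖a‖ + r := by
      have := norm_sub_le a (a - y)
      simpa using this
    calc ‖y‖ ≤ r / η + r / η := by linarith
      _ = _ := by ring
  have h3 : ‖y‖ ^ q ≤ (2 / η * r) ^ q := Real.rpow_le_rpow (norm_nonneg _) hy hq
  have h4 : 1 ≤ (2 / η * r) ^ q := Real.one_le_rpow (by
    calc (1 : ℝ) ≤ r / η + r / η := by linarith
      _ = _ := by ring) hq
  have h5 : 0 < r ^ q := Real.rpow_pos_of_pos hr0 _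
  rw [Real.mul_rpow (by positivity) hr0.le] at h3 h4
  rw [Real.rpow_neg hr0.le, le_div_iff₀ (by positivity), inv_mul_le_iff₀ h5]
  linarith

lemma integrableOn_kernel_far (n : ℕ) {s δ : ℝ} (hs : 0 < s) (hδ : 0 < δ) (hδ1 : δ ≤ 1)
    {a : Euc n} (ha : ‖a‖ ≤ 1) :
    IntegrableOn (fun y => ‖a - y‖ ^ (-((n : ℝ) + 2 * s))) (ball a δ)ᶜ := by
  have h := integrable_one_add_norm (μ := (volume : Measure (Euc n))) (r := (n : ℝ) + 2 * s)
    (by simp; positivity)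
  refine Integrable.mono' ((h.const_mul ((3 / δ) ^ ((n : ℝ) + 2 * s))).integrableOn)
    (Measurable.aestronglyMeasurable (by fun_prop)) ?_
  filter_upwards [ae_restrict_mem measurableSet_ball.compl] with y hy
  have hr : δ ≤ ‖a - y‖ := by
    simpa [mem_ball, dist_eq_norm, norm_sub_rev] using hy
  set r := ‖a - y‖ with hr'
  have hr0 : 0 < r := hδ.trans_le hr
  have h1 : 1 ≤ r / δ := (one_le_div hδ).2 hr
  have h2 : r ≤ r / δ := le_div_self hr0.le hδ hδ1
  have hy : 1 + ‖y‖ ≤ 3 / δ * r := by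
    have : ‖y‖ ≤ ‖a‖ + r := by
      have := norm_sub_le a (a - y)
      simpa using this
    calc 1 + ‖y‖ ≤ r / δ + r / δ + r / δ := by linarith
      _ = _ := by ring
  have hq : 0 ≤ (n : ℝ) + 2 * s := by positivity
  have h3 : (1 + ‖y‖) ^ ((n : ℝ) + 2 * s) ≤ (3 / δ * r) ^ ((n : ℝ) + 2 * s) :=
    Real.rpow_le_rpow (by positivity) hy hq
  rw [Real.mul_rpow (by positivity) hr0.le] at h3
  rw [Real.norm_of_nonneg (by positivity), Real.rpow_neg hr0.le, Real.rpow_neg (by positivity),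
    ← div_eq_mul_inv, le_div_iff₀ (by positivity), inv_mul_le_iff₀ (by positivity)]
  linarith

/-- Away from `a`, the antisymmetric kernel is controlled by the weight defining `‖·‖_{𝒜ₛ}`. -/
lemma aKernel_mul_abs_le (n : ℕ) [NeZero n] {s η : ℝ} (hs : 0 < s) (hη : 0 < η) (hη1 : η ≤ 1)
    {a y : Euc n} (ha : ‖a‖ ≤ 1) (ha0 : 0 ≤ a 0) (hy0 : 0 ≤ y 0) (hr : η ≤ ‖a - y‖) (v : ℝ) :
    aKernel n s a y * |v| ≤ 4 * (n + 2 * s) * (2 / η) ^ ((n : ℝ) + 2 * s + 2) * a 0 *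
      (y 0 * |v| / (1 + ‖y‖ ^ ((n : ℝ) + 2 * s + 2))) := by
  have hne : y ≠ a := by
    rintro rfl
    simp at hr; linarith
  have h1 := aKernel_le n hs ha0 hy0 hne
  have h2 := rpow_far_le (q := (n : ℝ) + 2 * s + 2) (by positivity) hη hη1 ha hr
  calc aKernel n s a y * |v|
      ≤ (2 * (n + 2 * s) * a 0 * y 0 * (2 * (2 / η) ^ ((n : ℝ) + 2 * s + 2) /
        (1 + ‖y‖ ^ ((n : ℝ) + 2 * s + 2)))) * |v| := by
        refine mul_le_mul_of_nonneg_right (h1.trans ?_) (abs_nonneg _)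
        gcongr
    _ = _ := by ring

lemma measurable_aKernel (n : ℕ) [NeZero n] (s : ℝ) (a : Euc n) :
    Measurable (aKernel n s a) := by
  unfold aKernel
  fun_prop

/-- The truncated integrals in the definition of `(-Δ)ˢ u` are genuine (no junk value). -/
lemma integrableOn_truncated (n : ℕ) [NeZero n] {s δ : ℝ} (hs : s ∈ Set.Ioo (0 : ℝ) 1)
    (hδ : 0 < δ) (hδ1 : δ ≤ 1) {a : Euc n} (ha : ‖a‖ ≤ 1) (ha0 : 0 < a 0) {u : Euc n → ℝ}
    (hu : MemA n s u) :
    IntegrableOn (fun y => aKernel n s a y * (u a - u y)) (halfSpace n \ ball a δ) := by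
  have hH := measurableSet_halfSpace n
  have i1 : IntegrableOn (fun y => aKernel n s a y * u a) (halfSpace n \ ball a δ) := by
    refine Integrable.mul_const ?_ _
    refine Integrable.sub ?_ ?_
    · exact (integrableOn_kernel_far n hs.1 hδ hδ1 ha).mono_set fun y hy => hy.2
    · exact (reflected_kernel_mass n hs ha0).1.mono_set Set.sdiff_subset
  have i2 : IntegrableOn (fun y => aKernel n s a y * u y) (halfSpace n \ ball a δ) := by
    refine Integrable.mono' ((hu.2.2.mono_set (Set.sdiff_subset (t := ball a δ))).const_mul
      (4 * (n + 2 * s) * (2 / δ) ^ ((n : ℝ) + 2 * s + 2) * a 0))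
      ((measurable_aKernel n s a).aestronglyMeasurable.mul
        hu.2.1.aestronglyMeasurable.restrict) ?_
    filter_upwards [ae_restrict_mem (hH.diff measurableSet_ball)] with y hy
    have hy0 : 0 < y 0 := hy.1
    have hr : δ ≤ ‖a - y‖ := by
      simpa [mem_ball, dist_eq_norm, norm_sub_rev] using hy.2
    have hne : y ≠ a := by
      rintro rfl
      simp at hr; linarith
    rw [norm_mul, Real.norm_of_nonneg (aKernel_nonneg n hs.1 ha0.le hy0.le hne), Real.norm_eq_abs]
    exact aKernel_mul_abs_le n hs.1 hδ hδ1 ha ha0.le hy0.le hr _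
  refine (i1.sub i2).congr (Eventually.of_forall fun y => ?_)
  simp only [Pi.sub_apply]; ring

/-- Geometry of the ball `B_{R/4}(a + (R/2) e₁)`: it lies in `B_R(a)`, stays away from `a` and at
height comparable to `a₁ + R`. -/
lemma gain_ball (n : ℕ) [NeZero n] {R : ℝ} (hR : 0 < R) {a y : Euc n}
    (hy : y ∈ ball (a + (R / 2) • e1 n) (R / 4)) :
    a 0 + R / 4 ≤ y 0 ∧ R / 4 ≤ ‖a - y‖ ∧ ‖a - y‖ < R := by
  rw [mem_ball, dist_eq_norm] at hy
  have he : ‖(R / 2) • e1 n‖ = R / 2 := by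
    rw [norm_smul, e1, Real.norm_of_nonneg (by positivity)]; simp
  have h0 := (abs_coord_le_norm _ 0).trans hy.le
  have h0' : |y 0 - (a 0 + R / 2)| ≤ R / 4 := by simpa [e1] using h0
  refine ⟨by linarith [(abs_le.1 h0').1], ?_, ?_⟩
  · have := norm_sub_le (y - (a + (R / 2) • e1 n)) (y - a)
    have e : y - (a + (R / 2) • e1 n) - (y - a) = - ((R / 2) • e1 n) := by abel
    rw [e, norm_neg, he, norm_sub_rev y a] at this
    linarith
  · have := norm_add_le (y - (a + (R / 2) • e1 n)) ((R / 2) • e1 n)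
    have e : y - (a + (R / 2) • e1 n) + (R / 2) • e1 n = y - a := by abel
    rw [e, he, norm_sub_rev y a] at this
    linarith

lemma bar_pos_of_near (n : ℕ) [NeZero n] (k : ℕ) {m D : ℝ} {a y : Euc n} (hm : m ≤ 1)
    (hD : D = m - ‖a‖ ^ 2) (hD0 : 0 < D) (hy : ‖a - y‖ ≤ D / 6) (hy0 : 0 < y 0) :
    ‖y‖ ^ 2 < m ∧ (2 / 3 : ℝ) ^ k * (y 0 * (D ^ k)⁻¹) ≤ bar n m k y ∧ 0 < bar n m k y := by
  rw [norm_sub_rev] at hy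
  have h1 := relChange_spec hD hD0 (y - a)
  have h2 := (abs_relChange_le hm hD hD0 hy).trans (three_mul_div_le hD0 hy)
  rw [add_sub_cancel] at h1
  obtain ⟨h3, h4⟩ := abs_le.1 h2
  have h5 : 0 < m - ‖y‖ ^ 2 := by rw [h1]; exact mul_pos hD0 (by linarith)
  refine ⟨by linarith, ?_, by unfold bar; positivity⟩
  have h6 : m - ‖y‖ ^ 2 ≤ 3 / 2 * D := by rw [h1]; nlinarith
  unfold bar
  have : ((3 / 2 * D) ^ k)⁻¹ ≤ ((m - ‖y‖ ^ 2) ^ k)⁻¹ := by gcongr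
  calc _ = y 0 * ((3 / 2 * D) ^ k)⁻¹ := by
        rw [mul_pow, mul_inv, ← inv_pow (3 / 2 : ℝ)]; norm_num; ring
    _ ≤ _ := by gcongr

/-- Lower bound for the kernel against the barrier on the gain ball. -/
lemma gain_pointwise (n : ℕ) [NeZero n] (k : ℕ) {s m D R : ℝ} (hs : 0 < s) {a y : Euc n}
    (hm : m ≤ 1) (hD : D = m - ‖a‖ ^ 2) (hD0 : 0 < D) (ha : 0 < a 0) (hR : 0 < R)
    (hRD : R ≤ D / 6) (hy : y ∈ ball (a + (R / 2) • e1 n) (R / 4)) :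
    (2 / 3 : ℝ) ^ k / 8 * R ^ (-((n : ℝ) + 2 * s)) * bar n m k a ≤
      aKernel n s a y * bar n m k y ∧
    R ^ (-((n : ℝ) + 2 * s)) ≤ ‖a - y‖ ^ (-((n : ℝ) + 2 * s)) := by
  obtain ⟨g1, g2, g3⟩ := gain_ball n hR hy
  have hy0 : 0 < y 0 := by linarith
  have hr0 : 0 < ‖a - y‖ := by linarith
  have hne : y ≠ a := by
    rintro rfl
    simp at hr0
  obtain ⟨-, b2, -⟩ := bar_pos_of_near n k hm hD hD0 (g3.le.trans hRD) hy0
  have hG : R ^ (-((n : ℝ) + 2 * s)) ≤ ‖a - y‖ ^ (-((n : ℝ) + 2 * s)) :=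
    Real.rpow_le_rpow_of_nonpos hr0 g3.le (by
      have : (0 : ℝ) ≤ n := n.cast_nonneg
      linarith)
  refine ⟨?_, hG⟩
  have hK := le_aKernel n hs ha.le hy0.le hne
  have hstar : ‖reflFirst n a - y‖ ^ 2 ≤ 16 * y 0 ^ 2 := by
    rw [norm_sq_reflFirst_sub]
    nlinarith
  have hstar0 : 0 < ‖reflFirst n a - y‖ ^ 2 := by
    rw [norm_sq_reflFirst_sub]; positivity
  have hRp : 0 < R ^ (-((n : ℝ) + 2 * s)) := by positivity
  have hK2 : R ^ (-((n : ℝ) + 2 * s)) * (a 0 / (8 * y 0)) ≤ aKernel n s a y := by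
    refine le_trans ?_ hK
    refine mul_le_mul hG ?_ (by positivity) (by positivity)
    rw [div_le_div_iff₀ (by positivity) hstar0]
    nlinarith [mul_le_mul_of_nonneg_left hstar ha.le]
  have eb : bar n m k a = a 0 * (D ^ k)⁻¹ := by rw [bar, ← hD]
  calc _ = R ^ (-((n : ℝ) + 2 * s)) * (a 0 / (8 * y 0)) *
        ((2 / 3 : ℝ) ^ k * (y 0 * (D ^ k)⁻¹)) := by rw [eb]; field_simp
    _ ≤ _ := mul_le_mul hK2 b2 (by positivity) (aKernel_nonneg n hs ha.le hy0.le hne)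

/-! ### Lower bound for the truncated operator -/

/-- Pointwise comparison behind the lower bound for the truncated operator at a touching point:
the integrand for `u` dominates that of the barrier, up to the gain on a ball and a far-field
error. -/
lemma truncated_pointwise (n : ℕ) [NeZero n] (k : ℕ) {s m D R δ τ ε : ℝ} (hs : 0 < s)
    {a : Euc n} {u : Euc n → ℝ} (hm : m ≤ 1) (hD : D = m - ‖a‖ ^ 2) (hD0 : 0 < D) (ha : 0 < a 0)
    (hR : 0 < R) (hRD : R ≤ D / 6) (hδR : δ ≤ R / 4) (hτ : 0 < τ) (hε : 0 < ε)
    (hua : u a = τ * bar n m k a + ε)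
    (hu : ∀ y : Euc n, 0 < y 0 → ‖y‖ ^ 2 < m → u y ≤ τ * bar n m k y + ε)
    (hnear : ∀ y ∈ ball a δ, τ * (bar n m k y - bar n m k a) ≤ 2 * ε)
    {y : Euc n} (hy0 : 0 < y 0) :
    (ball a R \ ball a δ).indicator (fun y => τ * (‖a - y‖ ^ (-((n : ℝ) + 2 * s)) *
          (bar n m k a - bar n m k y))) y +
        (ball a R).indicator (fun y => τ * (‖reflFirst n a - y‖ ^ (-((n : ℝ) + 2 * s)) *
          (bar n m k a + bar n m k y))) y +
        (ball (a + (R / 2) • e1 n) (R / 4)).indicator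
          (fun _ => (2 / 3 : ℝ) ^ k / 8 * R ^ (-((n : ℝ) + 2 * s)) * u a) y -
        4 * (n + 2 * s) * (2 / (R / 4)) ^ ((n : ℝ) + 2 * s + 2) * a 0 *
          (y 0 * |u y| / (1 + ‖y‖ ^ ((n : ℝ) + 2 * s + 2))) ≤
      ((ball a δ)ᶜ).indicator (fun y => aKernel n s a y * (u a - u y)) y +
        u a * (2 * ‖reflFirst n a - y‖ ^ (-((n : ℝ) + 2 * s))) := by
  set G := ‖a - y‖ ^ (-((n : ℝ) + 2 * s)) with hG
  set G' := ‖reflFirst n a - y‖ ^ (-((n : ℝ) + 2 * s)) with hG'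
  have hK : aKernel n s a y = G - G' := rfl
  set W := 4 * (n + 2 * s) * (2 / (R / 4)) ^ ((n : ℝ) + 2 * s + 2) * a 0 *
          (y 0 * |u y| / (1 + ‖y‖ ^ ((n : ℝ) + 2 * s + 2))) with hW
  have hW0 : 0 ≤ W := by positivity
  have hG'0 : 0 ≤ G' := by positivity
  have hna : ‖a‖ ≤ 1 := by nlinarith [norm_nonneg a]
  have hD1 : D ≤ 1 := by nlinarith [norm_nonneg a]
  have hba : 0 < bar n m k a := by unfold bar; rw [← hD]; positivity
  have hloss : R / 4 ≤ ‖a - y‖ → (G - G') * |u y| ≤ W := fun h =>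
    aKernel_mul_abs_le n hs (by linarith) (by linarith) hna ha.le hy0.le h (u y)
  by_cases h1 : y ∈ ball a δ
  · have hyδ : ‖a - y‖ < δ := by rwa [mem_ball, dist_comm, dist_eq_norm] at h1
    have h2 : y ∈ ball a R := ball_subset_ball (by linarith) h1
    have h3 : y ∉ ball (a + (R / 2) • e1 n) (R / 4) := fun h => by
      have := (gain_ball n hR h).2.1
      linarith
    rw [Set.indicator_of_notMem (show y ∉ ball a R \ ball a δ from fun h => h.2 h1), Set.indicator_of_mem h2,
      Set.indicator_of_notMem h3, Set.indicator_of_notMem (show y ∉ (ball a δ)ᶜ from fun h => h h1), hua]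
    have := mul_le_mul_of_nonneg_left (hnear y h1) hG'0
    linarith
  by_cases h2 : y ∈ ball a R
  · have hyR : ‖a - y‖ < R := by rwa [mem_ball, dist_comm, dist_eq_norm] at h2
    obtain ⟨b1, -, b3⟩ := bar_pos_of_near n k hm hD hD0 (hyR.le.trans hRD) hy0
    have huy := hu y hy0 b1
    rw [Set.indicator_of_mem (show y ∈ ball a R \ ball a δ from ⟨h2, h1⟩),
      Set.indicator_of_mem h2, Set.indicator_of_mem (show y ∈ (ball a δ)ᶜ from h1), hK]
    by_cases h3 : y ∈ ball (a + (R / 2) • e1 n) (R / 4)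
    · rw [Set.indicator_of_mem h3]
      obtain ⟨g1, g2⟩ := gain_pointwise n k hs hm hD hD0 ha hR hRD h3
      obtain ⟨-, g3, -⟩ := gain_ball n hR h3
      have hl := hloss g3
      rw [hK] at g1
      have hc4 : (2 / 3 : ℝ) ^ k / 8 ≤ 1 := by
        have : (2 / 3 : ℝ) ^ k ≤ 1 := pow_le_one₀ (by norm_num) (by norm_num)
        linarith
      have hRp : 0 < R ^ (-((n : ℝ) + 2 * s)) := by positivity
      have hya : y ≠ a := by
        rintro rfl
        simp at g3
        linarith
      have hKn : 0 ≤ G - G' := aKernel_nonneg n hs ha.le hy0.le hya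
      have e1 := mul_le_mul_of_nonneg_left g1 hτ.le
      have e2 : (2 / 3 : ℝ) ^ k / 8 * (R ^ (-((n : ℝ) + 2 * s)) * ε) ≤ 1 * (G * ε) := by
        refine mul_le_mul hc4 ?_ (by positivity) zero_le_one
        exact mul_le_mul_of_nonneg_right g2 hε.le
      have e3 := mul_le_mul_of_nonneg_left (le_abs_self (u y)) hKn
      have e4 := mul_nonneg hG'0 hε.le
      rw [hua]
      nlinarith
    · rw [Set.indicator_of_notMem h3]
      by_cases hya : y = a
      · subst hya
        nlinarith [mul_nonneg hG'0 hε.le]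
      have hKn : 0 ≤ G - G' := aKernel_nonneg n hs ha.le hy0.le hya
      have e1 := mul_le_mul_of_nonneg_left huy hKn
      rw [hua]
      nlinarith [mul_nonneg hG'0 hε.le]
  · have h3 : y ∉ ball (a + (R / 2) • e1 n) (R / 4) := fun h => by
      apply h2
      rw [mem_ball, dist_comm, dist_eq_norm]
      exact (gain_ball n hR h).2.2
    have hyR : R ≤ ‖a - y‖ := by rwa [mem_ball, dist_comm, dist_eq_norm, not_lt] at h2
    rw [Set.indicator_of_notMem (show y ∉ ball a R \ ball a δ from fun h => h2 h.1),
      Set.indicator_of_notMem h2,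
      Set.indicator_of_notMem h3, Set.indicator_of_mem (show y ∈ (ball a δ)ᶜ from h1), hK]
    have hya : y ≠ a := by
      rintro rfl
      simp at hyR
      linarith
    have hKn : 0 ≤ G - G' := aKernel_nonneg n hs ha.le hy0.le hya
    have hl := hloss (by linarith)
    have e3 := mul_le_mul_of_nonneg_left (le_abs_self (u y)) hKn
    have hua0 : 0 < u a := by rw [hua]; positivity
    nlinarith [mul_nonneg hKn hua0.le, mul_nonneg hG'0 hua0.le]

/-- Lower bound for the truncated operator at a point where `u` is touched from above by a
multiple of the barrier. -/
lemma truncated_lower (n : ℕ) [NeZero n] (k : ℕ) {s m D R δ τ ε Q : ℝ}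
    (hs : s ∈ Set.Ioo (0 : ℝ) 1)
    {a : Euc n} {u : Euc n → ℝ} (hm : m ≤ 1) (hD : D = m - ‖a‖ ^ 2) (hD0 : 0 < D) (ha : 0 < a 0)
    (hR : 0 < R) (hRD : R ≤ D / 6) (hδ : 0 < δ) (hδR : δ ≤ R / 4) (hτ : 0 < τ) (hε : 0 < ε)
    (hA : MemA n s u) (hua : u a = τ * bar n m k a + ε)
    (hu : ∀ y : Euc n, 0 < y 0 → ‖y‖ ^ 2 < m → u y ≤ τ * bar n m k y + ε)
    (hnear : ∀ y ∈ ball a δ, τ * (bar n m k y - bar n m k a) ≤ 2 * ε)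
    (hInt : IntegrableOn (fun y => ‖a - y‖ ^ (-((n : ℝ) + 2 * s)) * (bar n m k a - bar n m k y))
        (ball a R \ ball a δ))
    (hQ : -Q ≤ ∫ y in ball a R \ ball a δ,
          ‖a - y‖ ^ (-((n : ℝ) + 2 * s)) * (bar n m k a - bar n m k y)) :
    -(τ * Q) + (2 / 3 : ℝ) ^ k / 8 * R ^ (-((n : ℝ) + 2 * s)) * u a *
        ((R / 4) ^ n * volume.real (ball (0 : Euc n) 1)) -
        4 * (n + 2 * s) * (2 / (R / 4)) ^ ((n : ℝ) + 2 * s + 2) * a 0 * ANorm n s u ≤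
      (∫ y in halfSpace n \ ball a δ, aKernel n s a y * (u a - u y)) +
        u a * (2 * ∫ y in halfSpace n, ‖reflFirst n a - y‖ ^ (-((n : ℝ) + 2 * s))) := by
  have hH := measurableSet_halfSpace n
  have hna : ‖a‖ ≤ 1 := by nlinarith [norm_nonneg a]
  have hD1 : D ≤ 1 := by nlinarith [norm_nonneg a]
  obtain ⟨hi', hhalf⟩ := half_integral_ge n k (s := s) (δ := δ) hm hD hD0 ha hRD hInt
  set f1 : Euc n → ℝ := fun y => ‖a - y‖ ^ (-((n : ℝ) + 2 * s)) *
          (bar n m k a - bar n m k y) with hf1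
  set f2 : Euc n → ℝ := fun y => ‖reflFirst n a - y‖ ^ (-((n : ℝ) + 2 * s)) *
          (bar n m k a + bar n m k y) with hf2
  set c3 := (2 / 3 : ℝ) ^ k / 8 * R ^ (-((n : ℝ) + 2 * s)) * u a with hc3
  set cW := 4 * (n + 2 * s) * (2 / (R / 4)) ^ ((n : ℝ) + 2 * s + 2) * a 0 with hcW
  set w : Euc n → ℝ := fun y => y 0 * |u y| / (1 + ‖y‖ ^ ((n : ℝ) + 2 * s + 2)) with hw
  set E := ball (a + (R / 2) • e1 n) (R / 4) with hE
  have hEm : MeasurableSet E := measurableSet_ball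
  have hAm : MeasurableSet (ball a R \ ball a δ) := measurableSet_ball.diff measurableSet_ball
  have hBm : MeasurableSet (ball a R) := measurableSet_ball
  have hCm : MeasurableSet (ball a δ)ᶜ := measurableSet_ball.compl
  have hEH : E ⊆ halfSpace n := fun y hy => by
    have := (gain_ball n hR hy).1
    show 0 < y 0
    linarith
  have hT := integrableOn_truncated n hs hδ (by linarith) hna ha hA
  have hm' := (reflected_kernel_mass n hs ha).1
  have I1 : IntegrableOn ((ball a R \ ball a δ).indicator (fun y => τ * f1 y)) (halfSpace n) := by
    rw [IntegrableOn, integrable_indicator_iff hAm, IntegrableOn, Measure.restrict_restrict hAm]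
    exact (hInt.mono_set Set.inter_subset_left).const_mul τ
  have I2 : IntegrableOn ((ball a R).indicator (fun y => τ * f2 y)) (halfSpace n) := by
    rw [IntegrableOn, integrable_indicator_iff hBm, IntegrableOn, Measure.restrict_restrict hBm]
    exact hi'.const_mul τ
  have I3 : IntegrableOn (E.indicator (fun _ => c3)) (halfSpace n) := by
    rw [IntegrableOn, integrable_indicator_iff hEm, IntegrableOn, Measure.restrict_restrict hEm]
    exact (integrableOn_const (by rw [hE]; exact measure_ball_lt_top.ne)).mono_set
      Set.inter_subset_left
  have I4 : IntegrableOn (fun y => cW * w y) (halfSpace n) := hA.2.2.const_mul cW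
  have I5 : IntegrableOn (((ball a δ)ᶜ).indicator (fun y => aKernel n s a y * (u a - u y)))
      (halfSpace n) := by
    rw [IntegrableOn, integrable_indicator_iff hCm, IntegrableOn, Measure.restrict_restrict hCm,
      Set.inter_comm]
    exact hT
  have I6 : IntegrableOn (fun y => u a * (2 * ‖reflFirst n a - y‖ ^ (-((n : ℝ) + 2 * s))))
      (halfSpace n) := (hm'.const_mul 2).const_mul (u a)
  have I12 := I1.add I2
  have I123 := I12.add I3
  have key := setIntegral_mono_on (I123.sub I4) (I5.add I6) hH
    fun y (hy : 0 < y 0) => truncated_pointwise n k hs.1 hm hD hD0 ha hR hRD hδR hτ hε hua hu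
      hnear hy
  rw [integral_sub' I123 I4, integral_add' I12 I3, integral_add' I1 I2, integral_add' I5 I6,
    setIntegral_indicator hAm, setIntegral_indicator hBm, setIntegral_indicator hEm,
    setIntegral_indicator hCm, Set.inter_eq_right.2 hEH, setIntegral_const, smul_eq_mul,
    integral_const_mul, integral_const_mul, integral_const_mul, integral_const_mul,
    integral_const_mul, ← Set.sdiff_eq, Set.inter_comm (halfSpace n), Set.inter_comm (halfSpace n)] at key
  have hvol : volume.real E = (R / 4) ^ n * volume.real (ball (0 : Euc n) 1) := by
    rw [hE, measureReal_def, Measure.addHaar_ball _ _ (by positivity), ENNReal.toReal_mul,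
      ENNReal.toReal_ofReal (by positivity), finrank_euclideanSpace, Fintype.card_fin]
    rfl
  rw [hvol] at key
  have hN : ∫ y in halfSpace n, w y = ANorm n s u := rfl
  rw [hN] at key
  have := mul_le_mul_of_nonneg_left (hQ.trans hhalf) hτ.le
  linarith

/-! ### Bound at a touching point -/

lemma exists_small_scale {s c₁ c₂ C K : ℝ} (hs : 0 < s) (hc₁ : 0 < c₁) (hc₂ : 0 < c₂) :
    ∃ θ : ℝ, 0 < θ ∧ θ ≤ 1 / 6 ∧ C * θ ^ 2 ≤ c₁ ∧ K * θ ^ (2 * s) ≤ c₂ := by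
  have t1 : Tendsto (fun θ : ℝ => C * θ ^ 2) (𝓝[>] 0) (𝓝 0) := by
    have : Continuous fun θ : ℝ => C * θ ^ 2 := by fun_prop
    simpa using (this.tendsto 0).mono_left nhdsWithin_le_nhds
  have t2 : Tendsto (fun θ : ℝ => K * θ ^ (2 * s)) (𝓝[>] 0) (𝓝 0) := by
    have : Continuous fun θ : ℝ => K * θ ^ (2 * s) :=
      continuous_const.mul (Real.continuous_rpow_const (by positivity))
    have h := (this.tendsto 0).mono_left (nhdsWithin_le_nhds (s := Set.Ioi 0))
    rwa [Real.zero_rpow (by positivity), mul_zero] at h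
  have t3 : ∀ᶠ θ : ℝ in 𝓝[>] 0, θ ≤ 1 / 6 :=
    nhdsWithin_le_nhds (Iic_mem_nhds (by norm_num))
  obtain ⟨θ, h1, h2, h3, h4⟩ := ((t1.eventually (Iic_mem_nhds hc₁)).and
    ((t2.eventually (Iic_mem_nhds hc₂)).and (t3.and self_mem_nhdsWithin))).exists
  exact ⟨θ, h4, h3, h1, h2⟩

/-- If `τ · bar + ε` touches a subsolution `u` from above at `a`, then `τ` is controlled by the
data. At the scale `R = θ (m - ‖a‖²)` with `θ` small, the gain `R^{-2s} u(a)` produced by the ball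
`B_{R/4}(a + (R/2) e₁)` absorbs both the curvature of the barrier and the zero-order term; the
exponent `n + 2` of the barrier is the one for which the far-field error scales like the barrier
itself. -/
lemma touching_bound (n : ℕ) [NeZero n] {s : ℝ} (hs : s ∈ Set.Ioo (0 : ℝ) 1) (K : ℝ) :
    ∃ C : ℝ, 0 < C ∧ ∀ (m τ ε M cc L : ℝ) (a : Euc n) (u : Euc n → ℝ), m ≤ 1 → ‖a‖ ^ 2 < m →
      0 < a 0 → 0 < τ → 0 < ε → 0 ≤ M → |cc| ≤ K → MemA n s u →
      HasAntiFracLap n s u a L → L + cc * u a ≤ M * a 0 →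
      u a = τ * bar n m (n + 2) a + ε →
      (∀ y : Euc n, 0 < y 0 → ‖y‖ ^ 2 < m → u y ≤ τ * bar n m (n + 2) y + ε) →
      τ ≤ C * (ANorm n s u + M) := by
  obtain ⟨C₁, hC₁, hann⟩ := exists_annulus_bound n (n + 2) hs.2
  set ω := volume.real (ball (0 : Euc n) 1) with hω
  have hω0 : 0 < ω := ENNReal.toReal_pos (measure_ball_pos _ _ one_pos).ne' measure_ball_lt_top.ne
  have hcn := cns_pos n hs
  set c₅ := (2 / 3 : ℝ) ^ (n + 2) / 8 * (ω / 4 ^ n) with hc₅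
  have hc₅0 : 0 < c₅ := by positivity
  obtain ⟨θ, hθ0, hθ6, hθ1, hθ2⟩ := exists_small_scale (C := C₁) (K := K) hs.1
    (show 0 < c₅ / 4 by positivity) (show 0 < cns n s * c₅ / 4 by positivity)
  set C₃ := 4 * ((n : ℝ) + 2 * s) * 8 ^ ((n : ℝ) + 2 * s + 2) * (θ ^ (n + 2))⁻¹ with hC₃
  have hs0 := hs.1
  have hC₃0 : 0 < C₃ := by positivity
  refine ⟨2 / (cns n s * c₅) * (1 + cns n s * C₃), by positivity, ?_⟩
  intro m τ ε M cc L a u hm ham ha hτ hε hM hcc hA hL hsub hua hu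
  obtain ⟨D, hD⟩ : ∃ D, D = m - ‖a‖ ^ 2 := ⟨_, rfl⟩
  have hD0 : 0 < D := by linarith
  have hD1 : D ≤ 1 := by nlinarith [norm_nonneg a]
  set R := θ * D with hR
  have hR0 : 0 < R := by positivity
  have hRD : R ≤ D / 6 := by nlinarith
  have hRθ : R ≤ θ := by nlinarith
  have hN : 0 ≤ ANorm n s u := setIntegral_nonneg (measurableSet_halfSpace n)
    fun y (hy : 0 < y 0) => by positivity
  set b := bar n m (n + 2) a with hb
  have hbe : b = a 0 * (D ^ (n + 2))⁻¹ := by rw [hb, bar, ← hD]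
  have hb0 : 0 < b := by rw [hbe]; positivity
  set r := R ^ (2 * s) with hr
  have hr0 : 0 < r := by positivity
  set Q := C₁ * (a 0 * (D ^ (n + 2 + 2))⁻¹) * R ^ (2 - 2 * s) with hQ
  -- continuity of the barrier makes the touching inequality almost an equality near `a`
  have hnear : ∀ᶠ δ : ℝ in 𝓝[>] 0, ∀ y ∈ ball a δ,
      τ * (bar n m (n + 2) y - bar n m (n + 2) a) ≤ 2 * ε := by
    have hc : ContinuousAt (fun y => τ * (bar n m (n + 2) y - bar n m (n + 2) a)) a :=
      ((((continuousOn_bar n (n + 2) hm hD hD0 le_rfl).continuousAt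
        (closedBall_mem_nhds a (by positivity))).sub continuousAt_const).const_mul τ)
    have h0 : ∀ᶠ y in 𝓝 a, τ * (bar n m (n + 2) y - bar n m (n + 2) a) ≤ 2 * ε :=
      hc.tendsto.eventually (Iic_mem_nhds (by rw [sub_self, mul_zero]; positivity))
    obtain ⟨δ₀, hδ₀, h1⟩ := Metric.eventually_nhds_iff_ball.1 h0
    filter_upwards [Ioc_mem_nhdsGT hδ₀] with δ hδ y hy
    exact h1 y (ball_subset_ball hδ.2 hy)
  have hlow : cns n s * (-(τ * Q) + (2 / 3 : ℝ) ^ (n + 2) / 8 * R ^ (-((n : ℝ) + 2 * s)) * u a *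
        ((R / 4) ^ n * ω) -
        4 * (n + 2 * s) * (2 / (R / 4)) ^ ((n : ℝ) + 2 * s + 2) * a 0 * ANorm n s u) ≤ L := by
    refine ge_of_tendsto hL ?_
    filter_upwards [hnear, Ioc_mem_nhdsGT (show 0 < R / 4 by positivity)] with δ h1 h2
    obtain ⟨i1, i2⟩ := hann m D R δ a hm hD hD0 ha.le hR0 hRD h2.1
    have h3 := truncated_lower n (n + 2) hs hm hD hD0 ha hR0 hRD h2.1 h2.2 hτ hε hA hua hu h1 i1 i2
    have h4 := (reflected_kernel_mass n hs ha).2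
    have h5 := mul_le_mul_of_nonneg_left h3 hcn.le
    refine h5.trans (le_of_eq ?_)
    have e : cns 1 s / s * u a * a 0 ^ (-(2 * s)) = u a * (cns 1 s / s * a 0 ^ (-(2 * s))) := by
      ring
    rw [e, ← h4]
    ring
  have e1 : Q = C₁ * θ ^ 2 * b * r⁻¹ := by
    have : R ^ (2 - 2 * s) = R ^ 2 * r⁻¹ := by
      rw [Real.rpow_sub hR0, hr, div_eq_mul_inv]; norm_num
    rw [hQ, this, hbe, hR]
    field_simp
    ring
  have e2 : (2 / 3 : ℝ) ^ (n + 2) / 8 * R ^ (-((n : ℝ) + 2 * s)) * u a * ((R / 4) ^ n * ω) =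
      c₅ * r⁻¹ * u a := by
    have : R ^ (-((n : ℝ) + 2 * s)) = (R ^ n)⁻¹ * r⁻¹ := by
      rw [Real.rpow_neg hR0.le, Real.rpow_add hR0, mul_inv, Real.rpow_natCast]
    rw [this, hc₅, div_pow R]
    field_simp
  have e3 : 4 * (n + 2 * s) * (2 / (R / 4)) ^ ((n : ℝ) + 2 * s + 2) * a 0 * ANorm n s u =
      C₃ * b * r⁻¹ * ANorm n s u := by
    have h8 : 2 / (R / 4) = 8 / R := by field_simp; norm_num
    have : (2 / (R / 4)) ^ ((n : ℝ) + 2 * s + 2) =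
        8 ^ ((n : ℝ) + 2 * s + 2) * ((R ^ (n + 2))⁻¹ * r⁻¹) := by
      rw [h8, Real.div_rpow (by norm_num) hR0.le, div_eq_mul_inv,
        show (n : ℝ) + 2 * s + 2 = ((n + 2 : ℕ) : ℝ) + 2 * s by push_cast; ring,
        Real.rpow_add hR0, mul_inv, Real.rpow_natCast]
    rw [this, hC₃, hbe, hR, mul_pow]
    field_simp
  rw [e1, e2, e3] at hlow
  have hr1 : r ≤ 1 := Real.rpow_le_one hR0.le (by linarith) (by positivity)
  have hrθ : r ≤ θ ^ (2 * s) := Real.rpow_le_rpow hR0.le hRθ (by positivity)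
  have hK0 : 0 ≤ K := (abs_nonneg cc).trans hcc
  have hu0 : 0 < u a := by rw [hua]; positivity
  have hub : τ * b ≤ u a := by rw [hua]; linarith
  have hab : a 0 * r ≤ b := by
    rw [hbe]
    refine mul_le_mul_of_nonneg_left (hr1.trans ?_) ha.le
    exact (one_le_inv₀ (by positivity)).2 (pow_le_one₀ hD0.le hD1)
  have h1 : cns n s * (-(τ * (C₁ * θ ^ 2 * b)) + c₅ * u a - C₃ * b * ANorm n s u) ≤ L * r := by
    have := mul_le_mul_of_nonneg_right hlow hr0.le
    refine le_trans (le_of_eq ?_) this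
    field_simp
  have h2 : L * r ≤ M * b + cns n s * c₅ / 4 * u a := by
    have h3 : -(K * u a) ≤ cc * u a := by
      have := mul_le_mul_of_nonneg_right (abs_le.1 hcc).1 hu0.le
      linarith
    have h4 : L ≤ M * a 0 + K * u a := by linarith
    have h5 := mul_le_mul_of_nonneg_right h4 hr0.le
    have h6 : K * r ≤ cns n s * c₅ / 4 := (mul_le_mul_of_nonneg_left hrθ hK0).trans hθ2
    have h7 := mul_le_mul_of_nonneg_right h6 hu0.le
    have h8 := mul_le_mul_of_nonneg_left hab hM
    linarith
  have h3 : cns n s * (τ * (C₁ * θ ^ 2 * b)) ≤ cns n s * c₅ / 4 * u a := by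
    have h4 := mul_le_mul_of_nonneg_right hθ1 (mul_pos hτ hb0).le
    have h5 := mul_le_mul_of_nonneg_left hub (show 0 ≤ c₅ / 4 by positivity)
    have h6 := mul_le_mul_of_nonneg_left (h4.trans h5) hcn.le
    linarith
  have h4 := mul_le_mul_of_nonneg_left hub (show 0 ≤ cns n s * c₅ / 2 by positivity)
  have h5 : cns n s * c₅ / 2 * τ ≤ M + cns n s * C₃ * ANorm n s u := by
    refine le_of_mul_le_mul_right ?_ hb0
    linarith
  have h6 : M + cns n s * C₃ * ANorm n s u ≤ (1 + cns n s * C₃) * (ANorm n s u + M) := by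
    have : 0 ≤ cns n s * C₃ * M := by positivity
    linarith
  have h7 := mul_le_mul_of_nonneg_left (h5.trans h6) (show 0 ≤ 2 / (cns n s * c₅) by positivity)
  calc τ = 2 / (cns n s * c₅) * (cns n s * c₅ / 2 * τ) := by field_simp
    _ ≤ _ := h7
    _ = _ := by ring

/-! ### Existence of a touching point -/

/-- Existence of a touching point: if `u > ε` somewhere in the half ball, then some `τ · bar + ε`
with `τ > 0` touches `u` from above. The maximum of `(u - ε) / bar` is attained on the compact set
`{u ≥ ε}`, which avoids the hyperplane because antisymmetry forces `u = 0` there. -/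
lemma exists_touching (n : ℕ) [NeZero n] (k : ℕ) (hk : k ≠ 0) {ρ' ε : ℝ} (hρ : 0 < ρ')
    {u : Euc n → ℝ} (hanti : AntiSymmFn n u) (hcont : ContinuousOn u (closedBall 0 ρ'))
    (hε : 0 < ε) {z : Euc n} (hz0 : 0 < z 0) (hz : ‖z‖ < ρ') (hzu : ε < u z) :
    ∃ (τ : ℝ) (a : Euc n), 0 < τ ∧ 0 < a 0 ∧ ‖a‖ ^ 2 < ρ' ^ 2 ∧
      u a = τ * bar n (ρ' ^ 2) k a + ε ∧
      ∀ y : Euc n, 0 < y 0 → ‖y‖ ^ 2 < ρ' ^ 2 → u y ≤ τ * bar n (ρ' ^ 2) k y + ε := by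
  set Q : Set (Euc n) := {x ∈ closedBall 0 ρ' ∩ {x | 0 ≤ x 0} | ε ≤ u x} with hQ
  have hS : IsCompact (closedBall (0 : Euc n) ρ' ∩ {x | 0 ≤ x 0}) :=
    (isCompact_closedBall _ _).inter_right (isClosed_le continuous_const (by fun_prop))
  have hQc : IsCompact Q := by
    refine hS.of_isClosed_subset ?_ fun x hx => hx.1
    exact (hcont.mono Set.inter_subset_left).preimage_isClosed_of_isClosed hS.isClosed isClosed_Ici
  have hQpos : ∀ x ∈ Q, 0 < x 0 := by
    intro x hx
    refine lt_of_le_of_ne hx.1.2 fun h => ?_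
    have h1 : reflFirst n x = x := by simp [reflFirst, ← h]
    have h2 := hanti x
    rw [h1] at h2
    have := hx.2
    linarith
  have hnorm : ∀ x : Euc n, ‖x‖ ^ 2 < ρ' ^ 2 ↔ ‖x‖ < ρ' := fun x =>
    sq_lt_sq₀ (norm_nonneg _) hρ.le
  have hzQ : z ∈ Q := ⟨⟨by simpa using hz.le, hz0.le⟩, hzu.le⟩
  set F : Euc n → ℝ := fun x => (u x - ε) * (ρ' ^ 2 - ‖x‖ ^ 2) ^ k / x 0 with hF
  have hFc : ContinuousOn F Q := by
    refine ContinuousOn.div (ContinuousOn.mul ?_ (by fun_prop)) (by fun_prop)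
      fun x hx => (hQpos x hx).ne'
    exact (hcont.mono fun x hx => hx.1.1).sub continuousOn_const
  obtain ⟨a, haQ, hmax⟩ := hQc.exists_isMaxOn ⟨z, hzQ⟩ hFc
  have hFz : 0 < F z := by
    have := (hnorm z).2 hz
    have h1 : 0 < ρ' ^ 2 - ‖z‖ ^ 2 := by linarith
    have h2 : 0 < u z - ε := by linarith
    simp only [hF]
    positivity
  have hτ : 0 < F a := hFz.trans_le (hmax hzQ)
  have ha0 := hQpos a haQ
  have haρ : ‖a‖ ^ 2 < ρ' ^ 2 := by
    rw [hnorm]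
    refine lt_of_le_of_ne (by simpa using haQ.1.1) fun h => ?_
    simp [hF, h, hk] at hτ
  refine ⟨F a, a, hτ, ha0, haρ, ?_, fun y hy0 hyρ => ?_⟩
  · have h1 : 0 < ρ' ^ 2 - ‖a‖ ^ 2 := by linarith
    simp only [hF, bar]
    field_simp
    ring
  · have h1 : 0 < ρ' ^ 2 - ‖y‖ ^ 2 := by linarith
    have hb : 0 < bar n (ρ' ^ 2) k y := by unfold bar; positivity
    rcases lt_or_ge (u y) ε with h | h
    · have := mul_pos hτ hb
      linarith
    · have hyQ : y ∈ Q := ⟨⟨by simpa using ((hnorm y).1 hyρ).le, hy0.le⟩, h⟩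
      have h2 := mul_le_mul_of_nonneg_right (hmax hyQ : F y ≤ F a) hb.le
      have h3 : F y * bar n (ρ' ^ 2) k y = u y - ε := by
        simp only [hF, bar]
        field_simp
      linarith

/-! ### The theorem -/

/-- boundary local boundedness of sub-solutions (Proposition 4.6). -/
theorem stmt17
    (n : ℕ) [NeZero n] (s : ℝ) (hs : s ∈ Set.Ioo (0 : ℝ) 1)
    (ρ : ℝ) (hρ : ρ ∈ Set.Ioo (0 : ℝ) 1) (K : ℝ) :
    ∃ C > (0 : ℝ),
      ∀ (M : ℝ) (c u : Euc n → ℝ) (α : ℝ),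
        0 ≤ M →
        0 < α → NotInteger (2 * s + α) →
        (∀ x ∈ Metric.ball (0 : Euc n) ρ ∩ halfSpace n, |c x| ≤ K) →
        MemHolderOn (2 * s + α) (Metric.ball (0 : Euc n) ρ) u →
        MemA n s u →
        (∀ x ∈ Metric.ball (0 : Euc n) ρ ∩ halfSpace n,
          ∃ L : ℝ, HasAntiFracLap n s u x L ∧ L + c x * u x ≤ M * x 0) →
        ∀ x ∈ Metric.ball (0 : Euc n) (ρ / 2) ∩ halfSpace n,
          u x / x 0 ≤ C * (ANorm n s u + M) := by
  obtain ⟨C, hC, htouch⟩ := touching_bound n hs K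
  have hρ0 := hρ.1
  have hρ1 := hρ.2
  refine ⟨C * ((5 * ρ ^ 2 / 16) ^ (n + 2))⁻¹, by positivity, ?_⟩
  intro M c u α hM _ _ hc hhol hA heq z hz
  have hz0 : 0 < z 0 := hz.2
  have hzn : ‖z‖ < ρ / 2 := by simpa using hz.1
  have hN : 0 ≤ ANorm n s u := setIntegral_nonneg (measurableSet_halfSpace n)
    fun y (hy : 0 < y 0) => by positivity
  rw [div_le_iff₀ hz0]
  have hcont : ContinuousOn u (closedBall 0 (3 * ρ / 4)) :=
    hhol.1.continuousOn.mono (closedBall_subset_ball (by linarith))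
  have hm : (3 * ρ / 4) ^ 2 ≤ 1 := by nlinarith
  refine le_of_forall_pos_le_add fun ε hε => ?_
  rcases le_or_gt (u z) ε with h | h
  · have : 0 ≤ C * ((5 * ρ ^ 2 / 16) ^ (n + 2))⁻¹ * (ANorm n s u + M) * z 0 := by positivity
    linarith
  obtain ⟨τ, a, hτ, ha0, han, hua, hu⟩ := exists_touching n (n + 2) (by lia)
    (show 0 < 3 * ρ / 4 by positivity) hA.1 hcont hε hz0 (by linarith) h
  have haB : a ∈ ball (0 : Euc n) ρ ∩ halfSpace n := by
    refine ⟨?_, ha0⟩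
    have := (sq_lt_sq₀ (norm_nonneg a) (by positivity)).1 han
    rw [mem_ball_zero_iff]
    linarith
  obtain ⟨L, hL, hsub⟩ := heq a haB
  have hτb := htouch _ τ ε M (c a) L a u hm han ha0 hτ hε hM (hc a haB) hA hL hsub hua hu
  have hzm : 5 * ρ ^ 2 / 16 ≤ (3 * ρ / 4) ^ 2 - ‖z‖ ^ 2 := by nlinarith [norm_nonneg z]
  have h5 : 0 < 5 * ρ ^ 2 / 16 := by positivity
  have huz := hu z hz0 (by linarith)
  have hb : bar n ((3 * ρ / 4) ^ 2) (n + 2) z ≤ z 0 * ((5 * ρ ^ 2 / 16) ^ (n + 2))⁻¹ := by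
    unfold bar
    gcongr
  have hb' : τ * bar n ((3 * ρ / 4) ^ 2) (n + 2) z ≤
      C * (ANorm n s u + M) * (z 0 * ((5 * ρ ^ 2 / 16) ^ (n + 2))⁻¹) :=
    (mul_le_mul_of_nonneg_left hb hτ.le).trans
      (mul_le_mul_of_nonneg_right hτb (by positivity))
  linarith

end
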